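/- arXiv:1707.00052 — 7 statements merged into one kernel-verified Lean document; each statement's English description precedes it below -/
import Mathlib

section
/- For all integers q ≥ 2, ℓ ≥ 1, t ≥ 1 and n ≥ ℓ, a code C ⊆ Z_q^n is t-tandem-duplication correcting (for duplications of length ℓ) if and only if it is t-tandem-deletion correcting (for deletions of length ℓ). -/
/-!
Write `x → y` for a single tandem duplication of length `ℓ`; a deletion is such a step read backwards.
In terms of positions, `x → y` means `y = x.take (i + ℓ) ++ x.drop i`, and a deletion at `i` is
possible in `z` exactly when `z` agrees with its shift by `ℓ` on the window `[i, i + ℓ)`; its result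
is `z.take i ++ z.drop (i + ℓ)`.

Both relations have the diamond property up to equality. Duplications at `i ≤ j` commute once the
second position is shifted (`tDup_diamond`). For deletions at `i ≤ j`, either the windows overlap or
touch (`j ≤ i + ℓ`), and then both deletions give the same word, or they are disjoint and the
deletions commute (`tDel_diamond`).

A word is in the sphere of radius `t` exactly when it is reached by `t` steps of the reflexive
closure, and a diamond for that closure tiles to a diamond for `t` steps (`reachK_diamond`). Hence
if the duplication spheres of `c₁` and `c₂` share a word `z`, then tiling deletions from `z` to `c₁`
and `c₂` yields a common word of their deletion spheres, and symmetrically.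
-/

namespace DupPaper

variable {α : Type*}

/-- `y` is obtained from `x` by one tandem duplication of length `ℓ`. -/
def TDup (ℓ : ℕ) (x y : List α) : Prop :=
  ∃ u v w : List α, v.length = ℓ ∧ x = u ++ v ++ w ∧ y = u ++ v ++ v ++ w

/-- `y` is obtained from `x` by one tandem deletion of length `ℓ`. -/
def TDel (ℓ : ℕ) (x y : List α) : Prop :=
  ∃ u v w : List α, v.length = ℓ ∧ x = u ++ v ++ v ++ w ∧ y = u ++ v ++ w

/-- `y` is obtained from `x` by one palindromic duplication of length `ℓ`. -/
def PDup (ℓ : ℕ) (x y : List α) : Prop :=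
  ∃ u v w : List α, v.length = ℓ ∧ x = u ++ v ++ w ∧ y = u ++ v ++ v.reverse ++ w

/-- `y` is obtained from `x` by one palindromic deletion of length `ℓ`. -/
def PDel (ℓ : ℕ) (x y : List α) : Prop :=
  ∃ u v w : List α, v.length = ℓ ∧ x = u ++ v ++ v.reverse ++ w ∧ y = u ++ v ++ w

/-- `y` is reached from `x` by exactly `k` steps of the relation `rel`. -/
def reachK (rel : List α → List α → Prop) : ℕ → List α → List α → Prop
  | 0, x, y => x = y
  | k + 1, x, y => ∃ z, rel x z ∧ reachK rel k z y

/-- The sphere of all words reachable from `x` by at most `t` operations of type `rel`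
(in particular it contains `x` itself). -/
def sphere (rel : List α → List α → Prop) (t : ℕ) (x : List α) : Set (List α) :=
  {y | ∃ k ≤ t, reachK rel k x y}

/-- A code `C` is `t`-error correcting for the error type `rel` if distinct codewords have
disjoint spheres. -/
def Correcting (rel : List α → List α → Prop) (t : ℕ) (C : Set (List α)) : Prop :=
  ∀ c₁ ∈ C, ∀ c₂ ∈ C, (sphere rel t c₁ ∩ sphere rel t c₂).Nonempty → c₁ = c₂

/-- The list of maximal runs (maximal blocks of identical consecutive symbols) of a word. -/
def runs [DecidableEq α] : List α → List (List α)
  | [] => []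
  | a :: rest =>
    match runs rest with
    | [] => [[a]]
    | r :: rs => if r.head? = some a then (a :: r) :: rs else [a] :: r :: rs

/-- `r(x)`: the number of runs of `x`. -/
def numRuns [DecidableEq α] (x : List α) : ℕ := (runs x).length

/-- `r_i(x)`: the number of runs of `x` of length exactly `i`. -/
def numRunsEq [DecidableEq α] (x : List α) (i : ℕ) : ℕ :=
  ((runs x).filter (fun r => r.length = i)).length

/-- `r_{≥ i}(x)`: the number of runs of `x` of length at least `i`. -/
def numRunsGe [DecidableEq α] (x : List α) (i : ℕ) : ℕ :=
  ((runs x).filter (fun r => i ≤ r.length)).length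

/-- `r_{I,2}(x)`: the number of runs of length exactly `2` located in the interior of `x`,
i.e. runs that are neither the first nor the last run of `x`. -/
def numInteriorRuns2 [DecidableEq α] (x : List α) : ℕ :=
  ((((runs x).drop 1).dropLast).filter (fun r => r.length = 2)).length

/-- The second component `v` of the `ℓ`-step derivative `φ_ℓ(x) = (u, v)`:
`v = (x_{ℓ+1}, …, x_n) − (x_1, …, x_{n−ℓ})` componentwise in `Z_q`. -/
def derivV (q ℓ : ℕ) (x : List (ZMod q)) : List (ZMod q) :=
  List.zipWith (· - ·) (x.drop ℓ) x

/-- Hamming weight: the number of nonzero entries. -/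
def wtH {q : ℕ} (v : List (ZMod q)) : ℕ := (v.filter (fun a => a ≠ 0)).length

/-- The lengths `(m_0, m_1, …, m_p)` of the (possibly empty) maximal zero runs of `v`,
where `v = (0^{m_0}, w_1, 0^{m_1}, w_2, …, w_p, 0^{m_p})` with all `w_i ≠ 0`. -/
def zeroRunLengths {q : ℕ} : List (ZMod q) → List ℕ
  | [] => [0]
  | a :: rest =>
    let t := zeroRunLengths rest
    if a = 0 then
      match t with
      | [] => [1]
      | m :: ms => (m + 1) :: ms
    else 0 :: t

/-- The `ℓ`-zero signature `σ_ℓ(v) = (⌊m_0/ℓ⌋, …, ⌊m_p/ℓ⌋)` of `v = derivV q ℓ x`. -/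
def sig (q ℓ : ℕ) (x : List (ZMod q)) : List ℕ :=
  (zeroRunLengths (derivV q ℓ x)).map (· / ℓ)

/-- The trunk `μ_ℓ(v)`: every maximal zero run of length `m` is shortened to length
`m mod ℓ`. -/
def trunk (q ℓ : ℕ) (v : List (ZMod q)) : List (ZMod q) :=
  ((runs v).map (fun r =>
    if r.head? = some (0 : ZMod q) then List.replicate (r.length % ℓ) (0 : ZMod q) else r)).flatten

/-- The root `ρ_ℓ(x) = (u, μ_ℓ(v))` where `φ_ℓ(x) = (u, v)` is the `ℓ`-step derivative. -/
def root (q ℓ : ℕ) (x : List (ZMod q)) : List (ZMod q) × List (ZMod q) :=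
  (x.take ℓ, trunk q ℓ (derivV q ℓ x))

/-- `ℓ1`-distance of two lists of naturals. -/
def l1diff (a b : List ℕ) : ℕ := (List.zipWith (fun s t => max s t - min s t) a b).sum

/-- The tandem duplication distance `d_{τ,ℓ}`. -/
def tdDist (q ℓ : ℕ) (x₁ x₂ : List (ZMod q)) : ℕ∞ :=
  if root q ℓ x₁ = root q ℓ x₂ then (l1diff (sig q ℓ x₁) (sig q ℓ x₂) : ℕ∞) else ⊤

/-- The palindromic duplication `π_{i,ℓ}(x) = (u v v^R w)` at position `i`,
where `x = (u v w)`, `|u| = i`, `|v| = ℓ`. -/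
def pdupAt (i ℓ : ℕ) (x : List α) : List α :=
  x.take (i + ℓ) ++ ((x.drop i).take ℓ).reverse ++ x.drop (i + ℓ)

/-- The result `(u v w)` of the palindromic deletion `π^δ_{i,ℓ}` applied to
`x = (u v v^R w)` with `|u| = i`, `|v| = ℓ`. -/
def pdelAt (i ℓ : ℕ) (x : List α) : List α :=
  x.take (i + ℓ) ++ x.drop (i + 2 * ℓ)

/-- The palindromic deletion `π^δ_{i,ℓ}` is defined at position `i` of `x`, i.e. `x` has the
form `(u v v^R w)` with `|u| = i` and `|v| = ℓ`. -/
def PDelDefinedAt (q ℓ i : ℕ) (x : List (ZMod q)) : Prop :=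
  ∃ u v w : List (ZMod q), u.length = i ∧ v.length = ℓ ∧ x = u ++ v ++ v.reverse ++ w

/-- `A(n', ℓ', ω)`: the number of words in `Z_q^{n'}` whose maximal zero runs all have length
at most `ℓ'` and whose Hamming weight is `ω`. -/
noncomputable def Acount (q n' ℓ' ω : ℕ) : ℕ :=
  {x : Fin n' → ZMod q | wtH (List.ofFn x) = ω ∧
    ∀ r ∈ runs (List.ofFn x), r.head? = some (0 : ZMod q) → r.length ≤ ℓ'}.ncard

/-- Integer binomial coefficient with the conventions `C(a,b) = 0` for `a ≥ 0 > b` or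
`0 ≤ a < b`, `C(-1,-1) = 1`, and `C(a,-1) = 0` for `a ≥ 0`. -/
def ichoose (a b : ℤ) : ℕ :=
  if a = -1 ∧ b = -1 then 1
  else if 0 ≤ a ∧ 0 ≤ b then Nat.choose a.toNat b.toNat
  else 0

/-- `r^{(0)}(A^π_ℓ(x))`: the number of maximal blocks of consecutive all-zero columns of the
matrix `A^π_ℓ(x) ∈ Z_q^{ℓ × (n−2ℓ+1)}` whose entry in row `s` and column `c`
(`1 ≤ s ≤ ℓ`, `1 ≤ c ≤ n−2ℓ+1`) is `x_{2ℓ+c−s} − x_{c+s−1}`. -/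
def zeroColBlocks (q ℓ n : ℕ) (x : List (ZMod q)) : ℕ :=
  ((runs ((List.range (n - 2 * ℓ + 1)).map (fun c =>
      (List.range ℓ).all (fun s =>
        x.getD (2 * ℓ + c - s - 1) (0 : ZMod q) = x.getD (c + s) (0 : ZMod q))))).filter
    (fun r => r.head? = some true)).length

/-! ### Tiling diamonds -/

lemma reachK_snoc {rel : List α → List α → Prop} {k : ℕ} {x y z : List α}
    (h : reachK rel k x y) (hyz : rel y z) : reachK rel (k + 1) x z := by
  induction k generalizing x with
  | zero =>
    cases h
    exact ⟨z, hyz, rfl⟩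
  | succ k ih =>
    obtain ⟨a, ha, hk⟩ := h
    exact ⟨a, ha, ih hk⟩

lemma reachK_swap {rel rel' : List α → List α → Prop} (hr : ∀ x y, rel x y → rel' y x)
    {k : ℕ} {x y : List α} (h : reachK rel k x y) : reachK rel' k y x := by
  induction k generalizing x with
  | zero => exact Eq.symm h
  | succ k ih =>
    obtain ⟨a, ha, hk⟩ := h
    exact reachK_snoc (ih hk) (hr _ _ ha)

/-- The diamond property up to equality: two successors of a word are equal or have a common
successor. -/
def Diamond (rel : List α → List α → Prop) : Prop :=
  ∀ z x y, rel z x → rel z y → x = y ∨ ∃ w, rel x w ∧ rel y w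

/-- One step against `m` steps: the short side of the strip may collapse, and so may one step of
the long side. -/
lemma reachK_strip {rel : List α → List α → Prop} (hd : Diamond rel) {m : ℕ} {z x y : List α}
    (hx : rel z x) (hy : reachK rel m z y) :
    ∃ w, (∃ k ≤ m, reachK rel k x w) ∧ (y = w ∨ rel y w) := by
  induction m generalizing z x with
  | zero =>
    cases hy
    exact ⟨x, ⟨0, le_rfl, rfl⟩, Or.inr hx⟩
  | succ m ih =>
    obtain ⟨a, ha, hm⟩ := hy
    rcases hd z x a hx ha with rfl | ⟨b, hxb, hab⟩
    · exact ⟨y, ⟨m, Nat.le_succ m, hm⟩, Or.inl rfl⟩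
    · obtain ⟨w, ⟨k, hk, hbw⟩, hyw⟩ := ih hab hm
      exact ⟨w, ⟨k + 1, by omega, b, hxb, hbw⟩, hyw⟩

lemma reachK_diamond {rel : List α → List α → Prop} (hd : Diamond rel) {m n : ℕ}
    {z x y : List α} (hx : reachK rel n z x) (hy : reachK rel m z y) :
    ∃ w, (∃ k ≤ m, reachK rel k x w) ∧ ∃ k ≤ n, reachK rel k y w := by
  induction n generalizing z y m with
  | zero =>
    cases hx
    exact ⟨y, ⟨m, le_rfl, hy⟩, 0, le_rfl, rfl⟩
  | succ n ih =>
    obtain ⟨a, ha, hn⟩ := hx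
    obtain ⟨b, ⟨k, hk, hab⟩, hyb⟩ := reachK_strip hd ha hy
    obtain ⟨w, ⟨k', hk', hxw⟩, j, hj, hbw⟩ := ih hn hab
    refine ⟨w, ⟨k', by omega, hxw⟩, ?_⟩
    rcases hyb with rfl | hyb
    · exact ⟨j, by omega, hbw⟩
    · exact ⟨j + 1, by omega, b, hyb, hbw⟩

/-- If `rel'` contains the inverse of `rel` and has the diamond property, then disjointness of
`rel'`-spheres implies disjointness of `rel`-spheres. -/
lemma correcting_of_diamond {rel rel' : List α → List α → Prop}
    (hr : ∀ x y, rel x y → rel' y x) (hd : Diamond rel') {t : ℕ} {C : Set (List α)}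
    (h : Correcting rel' t C) : Correcting rel t C := by
  rintro c₁ h₁ c₂ h₂ ⟨z, ⟨k₁, hk₁, hz₁⟩, k₂, hk₂, hz₂⟩
  obtain ⟨w, ⟨a, ha, haw⟩, b, hb, hbw⟩ :=
    reachK_diamond hd (reachK_swap hr hz₁) (reachK_swap hr hz₂)
  exact h c₁ h₁ c₂ h₂ ⟨w, ⟨a, by omega, haw⟩, b, by omega, hbw⟩

/-! ### Positional descriptions and diamonds -/

lemma tDup_iff {ℓ : ℕ} {x y : List α} :
    TDup ℓ x y ↔ ∃ i, i + ℓ ≤ x.length ∧ y = x.take (i + ℓ) ++ x.drop i := by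
  constructor
  · rintro ⟨u, v, w, rfl, rfl, rfl⟩
    refine ⟨u.length, by simp, ?_⟩
    simp [List.take_append]
  · rintro ⟨i, hi, rfl⟩
    refine ⟨x.take i, (x.drop i).take ℓ, x.drop (i + ℓ), ?_, ?_, ?_⟩
    · simp; omega
    · rw [← List.take_add, List.take_append_drop]
    · rw [← List.take_add, List.append_assoc, ← List.drop_drop, List.take_append_drop]

lemma tDel_iff {ℓ : ℕ} {x y : List α} :
    TDel ℓ x y ↔ ∃ i, i + 2 * ℓ ≤ x.length ∧ (∀ k, i ≤ k → k < i + ℓ → x[k]? = x[k + ℓ]?) ∧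
      y = x.take i ++ x.drop (i + ℓ) := by
  constructor
  · rintro ⟨u, v, w, rfl, rfl, rfl⟩
    refine ⟨u.length, by simp; omega, ?_, ?_⟩
    · intro k h1 h2
      grind
    · simp [List.drop_append]
  · rintro ⟨i, hi, hp, rfl⟩
    have hsq : (x.drop i).take ℓ = (x.drop (i + ℓ)).take ℓ := by
      apply List.ext_getElem?
      intro k
      have := hp (i + k)
      grind
    refine ⟨x.take i, (x.drop i).take ℓ, x.drop (i + 2 * ℓ), ?_, ?_, ?_⟩
    · simp; omega
    · rw [← List.take_add]
      conv_rhs => rw [hsq, ← List.take_add, show i + ℓ + ℓ = i + 2 * ℓ by omega]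
      rw [List.take_append_drop]
    · rw [hsq, show i + 2 * ℓ = (i + ℓ) + ℓ by omega, ← List.drop_drop (i := ℓ) (j := i + ℓ),
        List.append_assoc, List.take_append_drop]

lemma getElem?_take_add_append_drop (z : List α) {i m : ℕ} (hi : i + m ≤ z.length) (k : ℕ) :
    (z.take (i + m) ++ z.drop i)[k]? = if k < i + m then z[k]? else z[k - m]? := by
  rw [List.getElem?_append, List.length_take, min_eq_left hi]
  split_ifs with h
  · simp [h]
  · rw [List.getElem?_drop]
    congr 1
    omega

lemma tDup_diamond (ℓ : ℕ) : Diamond (TDup (α := α) ℓ) := by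
  have key : ∀ (z : List α) (i j : ℕ), i ≤ j → j + ℓ ≤ z.length →
      ∃ w, TDup ℓ (z.take (i + ℓ) ++ z.drop i) w ∧ TDup ℓ (z.take (j + ℓ) ++ z.drop j) w := by
    intro z i j hij hj
    refine ⟨_, tDup_iff.2 ⟨j + ℓ, ?_, rfl⟩, tDup_iff.2 ⟨i, ?_, ?_⟩⟩
    · simp; omega
    · simp; omega
    · apply List.ext_getElem?
      intro k
      rw [getElem?_take_add_append_drop (z.take (i + ℓ) ++ z.drop i) (by simp; omega),
        getElem?_take_add_append_drop (z.take (j + ℓ) ++ z.drop j) (by simp; omega)]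
      simp only [getElem?_take_add_append_drop z hj,
        getElem?_take_add_append_drop z (show i + ℓ ≤ z.length by omega)]
      split_ifs <;> first | rfl | omega
  intro z x y hx hy
  obtain ⟨i, hi, rfl⟩ := tDup_iff.1 hx
  obtain ⟨j, hj, rfl⟩ := tDup_iff.1 hy
  right
  rcases le_total i j with h | h
  · exact key z i j h hj
  · obtain ⟨w, h1, h2⟩ := key z j i h hi
    exact ⟨w, h2, h1⟩

lemma getElem?_take_append_drop (z : List α) {i m : ℕ} (hi : i ≤ z.length) (k : ℕ) :
    (z.take i ++ z.drop (i + m))[k]? = if k < i then z[k]? else z[k + m]? := by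
  grind

lemma tDel_diamond (ℓ : ℕ) : Diamond (TDel (α := α) ℓ) := by
  have key : ∀ (z : List α) (i j : ℕ), i ≤ j → j + 2 * ℓ ≤ z.length →
      (∀ k, i ≤ k → k < i + ℓ → z[k]? = z[k + ℓ]?) →
      (∀ k, j ≤ k → k < j + ℓ → z[k]? = z[k + ℓ]?) →
      z.take i ++ z.drop (i + ℓ) = z.take j ++ z.drop (j + ℓ) ∨
      ∃ w, TDel ℓ (z.take i ++ z.drop (i + ℓ)) w ∧ TDel ℓ (z.take j ++ z.drop (j + ℓ)) w := by
    intro z i j hij hj hpi hpj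
    rcases le_total j (i + ℓ) with hov | hdis
    · left
      apply List.ext_getElem?
      intro k
      rw [getElem?_take_append_drop z (by omega), getElem?_take_append_drop z (by omega)]
      have := hpi k
      grind
    · right
      obtain ⟨d, rfl⟩ := Nat.exists_eq_add_of_le hdis
      refine ⟨_, tDel_iff.2 ⟨i + d, ?_, ?_, rfl⟩, tDel_iff.2 ⟨i, ?_, ?_, ?_⟩⟩
      · simp; omega
      · intro k h1 h2
        rw [getElem?_take_append_drop z (by omega), getElem?_take_append_drop z (by omega),
          if_neg (by omega), if_neg (by omega)]
        exact hpj (k + ℓ) (by omega) (by omega)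
      · simp; omega
      · intro k h1 h2
        rw [getElem?_take_append_drop z (by omega), getElem?_take_append_drop z (by omega),
          if_pos (by omega), hpi k h1 h2]
        -- The second copy of the square at `i` may already reach into the window at `i + ℓ + d`.
        split_ifs with h
        · rfl
        · exact hpj (k + ℓ) (by omega) (by omega)
      · apply List.ext_getElem?
        intro k
        rw [getElem?_take_append_drop (z.take i ++ z.drop (i + ℓ)) (by simp; omega),
          getElem?_take_append_drop (z.take (i + ℓ + d) ++ z.drop (i + ℓ + d + ℓ)) (by simp; omega)]
        simp only [getElem?_take_append_drop z (show i ≤ z.length by omega),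
          getElem?_take_append_drop z (show i + ℓ + d ≤ z.length by omega)]
        split_ifs <;> first | rfl | omega
  intro z x y hx hy
  obtain ⟨i, hi, hpi, rfl⟩ := tDel_iff.1 hx
  obtain ⟨j, hj, hpj, rfl⟩ := tDel_iff.1 hy
  rcases le_total i j with h | h
  · exact key z i j h hj hpi hpj
  · rcases key z j i h hi hpj hpi with h | ⟨w, h1, h2⟩
    · exact Or.inl h.symm
    · exact Or.inr ⟨w, h2, h1⟩

lemma TDup.tDel {ℓ : ℕ} (x y : List α) : TDup ℓ x y → TDel ℓ y x := by
  rintro ⟨u, v, w, h, hx, hy⟩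
  exact ⟨u, v, w, h, hy, hx⟩

lemma TDel.tDup {ℓ : ℕ} (x y : List α) : TDel ℓ x y → TDup ℓ y x := by
  rintro ⟨u, v, w, h, hx, hy⟩
  exact ⟨u, v, w, h, hy, hx⟩

/-- A code `C ⊆ Z_q^n` is `t`-tandem-duplication correcting (length `ℓ`) iff it is
`t`-tandem-deletion correcting (length `ℓ`). -/
theorem stmt0 (q ℓ t n : ℕ) (hq : 2 ≤ q) (hℓ : 1 ≤ ℓ) (ht : 1 ≤ t) (hn : ℓ ≤ n)
    (C : Set (List (ZMod q))) (hC : ∀ c ∈ C, c.length = n) :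
    Correcting (TDup ℓ) t C ↔ Correcting (TDel ℓ) t C := by
  exact ⟨correcting_of_diamond TDel.tDup (tDup_diamond ℓ),
    correcting_of_diamond TDup.tDel (tDel_diamond ℓ)⟩
end DupPaper
end

section
/- For all integers q ≥ 2, ℓ ≥ 1, t ≥ 1 and n ≥ ℓ, a code C ⊆ Z_q^n is t-tandem-duplication correcting (for duplications of length ℓ) if and only if d_{τ,ℓ}(c₁, c₂) ≥ 2t+1 for all distinct c₁, c₂ ∈ C. -/
/-! A tandem duplication of length `ℓ` acts on the derivative `φ_ℓ(x) = (u, v)` by inserting a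
block of `ℓ` zeros into `v` (`derivV_split`, `derivV_dup`), every insertion position is realised
(`tdup_of_zeroIns`), and `φ_ℓ` is injective (`deriv_injective`). So the question is about the
relation `ZeroIns` on derivative words.

An insertion keeps the trunk and adds one to a single entry of the signature. Hence if
`y` lies in the `t`-spheres of both `c₁` and `c₂`, the two roots agree with that of `y` and the
triangle inequality through the signature of `y` gives distance at most `2t`
(`reachK_zeroIns_invariants`).

Conversely, two words with the same root have a common descendant, whose signature is the
entrywise maximum of the two; it is reached by `k₁` and `k₂` duplications with `k₁ + k₂` equal to
the distance (`exists_common_descendant`). Codewords of equal length force `k₁ = k₂`, so distance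
at most `2t` gives `k₁ = k₂ ≤ t`, and the spheres intersect.
-/


namespace DupPaper

variable {α : Type*}

/-! ### Inserting zero blocks into a word -/

/-- `w` is obtained from `v` by inserting a block of `ℓ` zeros at an arbitrary position.
This is the effect of a tandem duplication on the `ℓ`-step derivative. -/
def ZeroIns (q ℓ : ℕ) (v w : List (ZMod q)) : Prop :=
  ∃ a b : List (ZMod q), v = a ++ b ∧ w = a ++ (List.replicate ℓ 0 ++ b)

lemma reachK_trans {rel : List α → List α → Prop} {j k : ℕ} {x y z : List α}
    (h₁ : reachK rel j x y) (h₂ : reachK rel k y z) : reachK rel (j + k) x z := by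
  induction j generalizing x with
  | zero => cases h₁; simpa using h₂
  | succ j ih =>
    obtain ⟨x', hx, hr⟩ := h₁
    rw [Nat.add_right_comm]
    exact ⟨x', hx, ih hr⟩

lemma reachK_zeroIns_append {q ℓ k : ℕ} (c : List (ZMod q)) {v w : List (ZMod q)}
    (h : reachK (ZeroIns q ℓ) k v w) : reachK (ZeroIns q ℓ) k (c ++ v) (c ++ w) := by
  induction k generalizing v with
  | zero => cases h; rfl
  | succ k ih =>
    obtain ⟨z, ⟨a, b, rfl, rfl⟩, hr⟩ := h
    exact ⟨_, ⟨c ++ a, b, by simp, rfl⟩, by simpa using ih hr⟩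

lemma reachK_zeroIns_replicate (q ℓ m k : ℕ) (r : List (ZMod q)) :
    reachK (ZeroIns q ℓ) k (List.replicate m 0 ++ r) (List.replicate (m + k * ℓ) 0 ++ r) := by
  induction k generalizing m with
  | zero => simp [reachK]
  | succ k ih =>
    refine ⟨List.replicate (m + ℓ) 0 ++ r, ⟨[], _, rfl, ?_⟩, ?_⟩
    · rw [Nat.add_comm, List.replicate_add, List.append_assoc, List.nil_append]
      rfl
    · have h := ih (m + ℓ)
      rwa [show m + ℓ + k * ℓ = m + (k + 1) * ℓ by ring] at h

lemma reachK_zeroIns_length {q ℓ k : ℕ} {v w : List (ZMod q)}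
    (h : reachK (ZeroIns q ℓ) k v w) : w.length = v.length + k * ℓ := by
  induction k generalizing v with
  | zero => cases h; simp
  | succ k ih =>
    obtain ⟨z, ⟨a, b, rfl, rfl⟩, hr⟩ := h
    rw [ih hr]
    simp
    ring

/-! ### Tandem duplications and the derivative -/

lemma zipWith_sub_self {q : ℕ} (v : List (ZMod q)) :
    List.zipWith (· - ·) v v = List.replicate v.length 0 := by
  induction v with
  | nil => rfl
  | cons a v ih => simp [List.replicate_succ]

lemma derivV_length (q ℓ : ℕ) (x : List (ZMod q)) : (derivV q ℓ x).length = x.length - ℓ := by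
  simp [derivV]

lemma derivV_split (q ℓ : ℕ) (u v w : List (ZMod q)) (hv : v.length = ℓ) :
    derivV q ℓ (u ++ v ++ w) =
      List.zipWith (· - ·) ((u ++ v).drop ℓ) u ++ List.zipWith (· - ·) w (v ++ w) := by
  unfold derivV
  rw [List.drop_append_of_le_length (by simp [hv]), List.append_assoc u v w,
    List.zipWith_append (by simp [hv])]

lemma derivV_dup (q ℓ : ℕ) (u v w : List (ZMod q)) (hv : v.length = ℓ) :
    derivV q ℓ (u ++ v ++ v ++ w) =
      List.zipWith (· - ·) ((u ++ v).drop ℓ) u ++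
        (List.replicate ℓ 0 ++ List.zipWith (· - ·) w (v ++ w)) := by
  rw [List.append_assoc (u ++ v) v w, derivV_split q ℓ u v _ hv, List.zipWith_append rfl,
    zipWith_sub_self, hv]

lemma zeroIns_of_tdup {q ℓ : ℕ} {x y : List (ZMod q)} (h : TDup ℓ x y) :
    ZeroIns q ℓ (derivV q ℓ x) (derivV q ℓ y) ∧ y.take ℓ = x.take ℓ ∧ ℓ ≤ x.length := by
  obtain ⟨u, v, w, hv, rfl, rfl⟩ := h
  refine ⟨⟨_, _, derivV_split q ℓ u v w hv, derivV_dup q ℓ u v w hv⟩, ?_, ?_⟩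
  · rw [List.append_assoc (u ++ v) v w,
      List.take_append_of_le_length (l₁ := u ++ v) (l₂ := v ++ w) (by simp [hv]),
      List.take_append_of_le_length (l₁ := u ++ v) (l₂ := w) (by simp [hv])]
  · simp [hv]; omega

lemma tdup_of_zeroIns {q ℓ : ℕ} {x : List (ZMod q)} (hx : ℓ ≤ x.length) {w : List (ZMod q)}
    (h : ZeroIns q ℓ (derivV q ℓ x) w) : ∃ y, TDup ℓ x y ∧ derivV q ℓ y = w := by
  obtain ⟨a, b, hab, rfl⟩ := h
  have hlen : a.length + b.length = x.length - ℓ := by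
    rw [← derivV_length q ℓ x, hab, List.length_append]
  obtain ⟨u, v, z, rfl, hu, hv⟩ : ∃ u v z, x = u ++ v ++ z ∧ u.length = a.length ∧
      v.length = ℓ := by
    refine ⟨x.take a.length, (x.drop a.length).take ℓ, (x.drop a.length).drop ℓ, ?_, ?_, ?_⟩
    · rw [List.append_assoc, List.take_append_drop, List.take_append_drop]
    · simp; omega
    · simp; omega
  rw [derivV_split q ℓ u v z hv] at hab
  obtain ⟨h1, h2⟩ := List.append_inj hab (by simp [hv, hu])
  exact ⟨_, ⟨u, v, z, hv, rfl, rfl⟩, by rw [derivV_dup q ℓ u v z hv, h1, h2]⟩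

lemma reachK_zeroIns_of_tdup {q ℓ k : ℕ} {x y : List (ZMod q)} (h : reachK (TDup ℓ) k x y) :
    reachK (ZeroIns q ℓ) k (derivV q ℓ x) (derivV q ℓ y) ∧ y.take ℓ = x.take ℓ := by
  induction k generalizing x with
  | zero => cases h; exact ⟨rfl, rfl⟩
  | succ k ih =>
    obtain ⟨z, hz, hr⟩ := h
    obtain ⟨h1, h2, -⟩ := zeroIns_of_tdup hz
    exact ⟨⟨_, h1, (ih hr).1⟩, (ih hr).2.trans h2⟩

lemma reachK_tdup_of_zeroIns {q ℓ k : ℕ} {x w : List (ZMod q)} (hx : ℓ ≤ x.length)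
    (h : reachK (ZeroIns q ℓ) k (derivV q ℓ x) w) :
    ∃ y, reachK (TDup ℓ) k x y ∧ derivV q ℓ y = w ∧ ℓ ≤ y.length := by
  induction k generalizing x with
  | zero => exact ⟨x, rfl, h, hx⟩
  | succ k ih =>
    obtain ⟨z, hz, hr⟩ := h
    obtain ⟨y, hy, rfl⟩ := tdup_of_zeroIns hx hz
    have hlen : ℓ ≤ y.length := by
      obtain ⟨u, v, r, hv, -, rfl⟩ := hy
      simp [hv]; omega
    obtain ⟨y', h1, h2⟩ := ih hlen hr
    exact ⟨y', ⟨y, hy, h1⟩, h2⟩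

/-- A word is determined by its `ℓ`-step derivative. -/
lemma deriv_injective {q ℓ : ℕ} (hℓ : 1 ≤ ℓ) {x y : List (ZMod q)} (hx : ℓ ≤ x.length)
    (hy : ℓ ≤ y.length) (ht : x.take ℓ = y.take ℓ) (hd : derivV q ℓ x = derivV q ℓ y) :
    x = y := by
  have hlen : x.length = y.length := by
    have h := congrArg List.length hd
    rw [derivV_length, derivV_length] at h
    omega
  refine List.ext_getElem hlen fun i => ?_
  induction i using Nat.strong_induction_on with
  | _ i ih =>
    intro h1 h2
    rcases lt_or_ge i ℓ with hi | hi
    · have e1 : (x.take ℓ)[i]? = (y.take ℓ)[i]? := by rw [ht]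
      simpa [List.getElem?_take, hi, h1, h2] using e1
    · obtain ⟨j, rfl⟩ := Nat.exists_eq_add_of_le hi
      have e1 : (derivV q ℓ x)[j]? = (derivV q ℓ y)[j]? := by rw [hd]
      have hj := ih j (by omega) (by omega) (by omega)
      have hjx : j < x.length := by omega
      have hjy : j < y.length := by omega
      simp [derivV, List.getElem?_zipWith, h1, h2, hjx, hjy, hj] at e1
      exact e1

/-! ### Zero runs, trunk and signature -/

/-- Every word is a zero run, or a zero run followed by a nonzero symbol and a shorter word. -/
lemma zeroRun_induction {q : ℕ} {P : List (ZMod q) → Prop}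
    (h0 : ∀ m, P (List.replicate m 0))
    (h1 : ∀ m a v, a ≠ 0 → P v → P (List.replicate m 0 ++ a :: v)) (v : List (ZMod q)) : P v := by
  -- Strengthened so that leading zeros can be absorbed into the first zero run.
  suffices h : ∀ m, P (List.replicate m 0 ++ v) by simpa using h 0
  induction v with
  | nil => intro m; simpa using h0 m
  | cons a v ih =>
    intro m
    by_cases ha : a = 0
    · subst ha
      have h := ih (m + 1)
      rwa [List.replicate_succ', List.append_assoc, List.singleton_append] at h
    · exact h1 m a v ha (by simpa using ih 0)

lemma runs_cons_head [DecidableEq α] (a : α) (v : List α) :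
    ∃ r rs, runs (a :: v) = (a :: r) :: rs := by
  rw [runs]
  rcases runs v with _ | ⟨r, rs⟩
  · exact ⟨[], [], rfl⟩
  · dsimp only
    split_ifs
    · exact ⟨_, _, rfl⟩
    · exact ⟨_, _, rfl⟩

lemma runs_replicate_succ [DecidableEq α] (a : α) (m : ℕ) :
    runs (List.replicate (m + 1) a) = [List.replicate (m + 1) a] := by
  induction m with
  | zero => rfl
  | succ m ih =>
    rw [List.replicate_succ, runs, ih]
    simp [List.replicate_succ]

lemma runs_replicate_append [DecidableEq α] (a b : α) (hab : b ≠ a) (m : ℕ) (v : List α) :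
    runs (List.replicate (m + 1) a ++ b :: v) =
      List.replicate (m + 1) a :: runs (b :: v) := by
  induction m with
  | zero =>
    obtain ⟨r, rs, h⟩ := runs_cons_head b v
    simp only [Nat.zero_add, List.replicate_one, List.singleton_append]
    rw [runs, h]
    simp [hab]
  | succ m ih =>
    rw [List.replicate_succ, List.cons_append, runs, ih]
    simp [List.replicate_succ]

lemma trunk_cons {q ℓ : ℕ} {a : ZMod q} (ha : a ≠ 0) (v : List (ZMod q)) :
    trunk q ℓ (a :: v) = a :: trunk q ℓ v := by
  unfold trunk
  rw [runs]
  rcases runs v with _ | ⟨r, rs⟩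
  · simp [ha]
  · dsimp only
    split_ifs with h
    · simp [ha, h]
    · simp [ha]

lemma trunk_replicate (q ℓ m : ℕ) :
    trunk q ℓ (List.replicate m 0) = List.replicate (m % ℓ) 0 := by
  cases m with
  | zero => simp [trunk, runs]
  | succ m =>
    unfold trunk
    rw [runs_replicate_succ]
    simp [List.head?_replicate]

lemma trunk_replicate_append {q ℓ : ℕ} {a : ZMod q} (ha : a ≠ 0) (m : ℕ) (v : List (ZMod q)) :
    trunk q ℓ (List.replicate m 0 ++ a :: v) =
      List.replicate (m % ℓ) 0 ++ a :: trunk q ℓ v := by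
  cases m with
  | zero => simp [trunk_cons ha]
  | succ m =>
    rw [← trunk_cons ha]
    unfold trunk
    rw [runs_replicate_append 0 a ha]
    simp [List.head?_replicate]

/-- Duplications leave the trunk of the derivative unchanged. -/
lemma trunk_zeroIns {q ℓ : ℕ} {v w : List (ZMod q)} (h : ZeroIns q ℓ v w) :
    trunk q ℓ w = trunk q ℓ v := by
  obtain ⟨a, b, rfl, rfl⟩ := h
  induction a using zeroRun_induction with
  | h0 m =>
    have key : ∀ m' (r : List (ZMod q)), List.replicate m (0 : ZMod q) ++
        (List.replicate ℓ 0 ++ (List.replicate m' 0 ++ r)) =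
        List.replicate (m + m' + ℓ) 0 ++ r := by
      intro m' r
      rw [show m + m' + ℓ = m + (ℓ + m') by ring, List.replicate_add, List.replicate_add,
        List.append_assoc, List.append_assoc]
    induction b using zeroRun_induction with
    | h0 m' =>
      have h := key m' []
      simp only [List.append_nil] at h
      rw [h, trunk_replicate, List.replicate_append_replicate, trunk_replicate,
        Nat.add_mod_right]
    | h1 m' c b hc _ =>
      rw [key, trunk_replicate_append hc, ← List.append_assoc,
        List.replicate_append_replicate, trunk_replicate_append hc, Nat.add_mod_right]
  | h1 m c a hc ih =>
    simp only [List.append_assoc, List.cons_append] at ih ⊢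
    rw [trunk_replicate_append hc, trunk_replicate_append hc, ih]

lemma zeroRunLengths_ne_nil {q : ℕ} (v : List (ZMod q)) : zeroRunLengths v ≠ [] := by
  cases v with
  | nil => simp [zeroRunLengths]
  | cons a v =>
    rw [zeroRunLengths]
    split_ifs
    · split <;> simp
    · simp

lemma zeroRunLengths_zero_cons {q : ℕ} {v : List (ZMod q)} {m : ℕ} {ms : List ℕ}
    (h : zeroRunLengths v = m :: ms) : zeroRunLengths (0 :: v) = (m + 1) :: ms := by
  rw [zeroRunLengths, h]
  simp

lemma zeroRunLengths_cons {q : ℕ} {a : ZMod q} (ha : a ≠ 0) (v : List (ZMod q)) :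
    zeroRunLengths (a :: v) = 0 :: zeroRunLengths v := by
  rw [zeroRunLengths]
  simp [ha]

lemma zeroRunLengths_replicate_append {q : ℕ} {v : List (ZMod q)} {m : ℕ} {ms : List ℕ}
    (h : zeroRunLengths v = m :: ms) (k : ℕ) :
    zeroRunLengths (List.replicate k 0 ++ v) = (m + k) :: ms := by
  induction k with
  | zero => simpa using h
  | succ k ih =>
    rw [List.replicate_succ, List.cons_append, zeroRunLengths_zero_cons ih]
    rfl

lemma zeroRunLengths_replicate (q k : ℕ) :
    zeroRunLengths (List.replicate k (0 : ZMod q)) = [k] := by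
  have h := zeroRunLengths_replicate_append (q := q) (v := []) (m := 0) (ms := []) rfl k
  simpa using h

lemma zeroRunLengths_block {q : ℕ} {a : ZMod q} (ha : a ≠ 0) (k : ℕ) (v : List (ZMod q)) :
    zeroRunLengths (List.replicate k 0 ++ a :: v) = k :: zeroRunLengths v := by
  rw [zeroRunLengths_replicate_append (zeroRunLengths_cons ha v) k, Nat.zero_add]

/-- Inserting `ℓ` zeros lengthens exactly one zero run, by `ℓ`. -/
lemma zeroRunLengths_zeroIns {q ℓ : ℕ} {v w : List (ZMod q)} (h : ZeroIns q ℓ v w) :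
    ∃ A m B, zeroRunLengths v = A ++ m :: B ∧ zeroRunLengths w = A ++ (m + ℓ) :: B := by
  obtain ⟨a, b, rfl, rfl⟩ := h
  induction a with
  | nil =>
    obtain ⟨m, ms, h⟩ := List.exists_cons_of_ne_nil (zeroRunLengths_ne_nil b)
    exact ⟨[], m, ms, h, zeroRunLengths_replicate_append h ℓ⟩
  | cons c a ih =>
    obtain ⟨A, m, B, h1, h2⟩ := ih
    by_cases hc : c = 0
    · subst hc
      cases A with
      | nil =>
        refine ⟨[], m + 1, B, zeroRunLengths_zero_cons h1, ?_⟩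
        rw [Nat.add_right_comm]
        exact zeroRunLengths_zero_cons h2
      | cons s A =>
        exact ⟨(s + 1) :: A, m, B, zeroRunLengths_zero_cons h1, zeroRunLengths_zero_cons h2⟩
    · refine ⟨0 :: A, m, B, ?_, ?_⟩
      · rw [List.cons_append, zeroRunLengths_cons hc, h1]; rfl
      · rw [List.cons_append, zeroRunLengths_cons hc, h2]; rfl

lemma replicate_zero_cons_inj {q : ℕ} {a b : ZMod q} (ha : a ≠ 0) (hb : b ≠ 0) {j k : ℕ}
    {v w : List (ZMod q)} (h : List.replicate j 0 ++ a :: v = List.replicate k 0 ++ b :: w) :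
    j = k ∧ a = b ∧ v = w := by
  induction j generalizing k with
  | zero =>
    cases k with
    | zero => simpa using h
    | succ k => simp [List.replicate_succ, ha] at h
  | succ j ih =>
    cases k with
    | zero => simp [List.replicate_succ, hb.symm] at h
    | succ k =>
      simp only [List.replicate_succ, List.cons_append, List.cons.injEq, true_and] at h
      simpa using ih h

lemma replicate_ne_append_cons {q : ℕ} {a : ZMod q} (ha : a ≠ 0) (j k : ℕ)
    (v : List (ZMod q)) : List.replicate j 0 ≠ List.replicate k 0 ++ a :: v := by
  intro h
  have hmem : a ∈ List.replicate j (0 : ZMod q) := by rw [h]; simp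
  exact ha (List.eq_of_mem_replicate hmem)

/-! ### The `ℓ1`-distance of signatures -/

/-- The `ℓ`-zero signature as a function of the derivative word. -/
def zsig {q : ℕ} (ℓ : ℕ) (v : List (ZMod q)) : List ℕ := (zeroRunLengths v).map (· / ℓ)

lemma l1diff_cons (s t : ℕ) (a b : List ℕ) :
    l1diff (s :: a) (t :: b) = (max s t - min s t) + l1diff a b := by
  simp [l1diff]

lemma l1diff_self (a : List ℕ) : l1diff a a = 0 := by
  induction a with
  | nil => rfl
  | cons s a ih => rw [l1diff_cons, ih]; simp

lemma l1diff_comm (a b : List ℕ) : l1diff a b = l1diff b a := by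
  induction a generalizing b with
  | nil => cases b <;> rfl
  | cons s a ih =>
    cases b with
    | nil => rfl
    | cons t b => rw [l1diff_cons, l1diff_cons, ih, max_comm, min_comm]

/-- The triangle inequality needs the middle list to be long enough, since `l1diff` truncates
to the shorter argument. -/
lemma l1diff_triangle (a b c : List ℕ) (h : a.length = b.length) :
    l1diff a c ≤ l1diff a b + l1diff b c := by
  induction a generalizing b c with
  | nil => simp [l1diff]
  | cons s a ih =>
    cases b with
    | nil => simp at h
    | cons t b =>
      cases c with
      | nil => simp [l1diff]
      | cons r c =>
        have := ih b c (by simpa using h)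
        simp only [l1diff_cons]
        omega

lemma l1diff_append_cons (A B : List ℕ) (m : ℕ) :
    l1diff (A ++ m :: B) (A ++ (m + 1) :: B) = 1 := by
  induction A with
  | nil => simp [l1diff_cons, l1diff_self]
  | cons s A ih => simp [l1diff_cons, ih]

lemma zsig_zeroIns {q ℓ : ℕ} (hℓ : 1 ≤ ℓ) {v w : List (ZMod q)} (h : ZeroIns q ℓ v w) :
    (zsig ℓ v).length = (zsig ℓ w).length ∧ l1diff (zsig ℓ v) (zsig ℓ w) = 1 := by
  obtain ⟨A, m, B, h1, h2⟩ := zeroRunLengths_zeroIns h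
  unfold zsig
  rw [h1, h2]
  refine ⟨by simp, ?_⟩
  simp only [List.map_append, List.map_cons]
  rw [Nat.add_div_right m hℓ]
  exact l1diff_append_cons _ _ _

/-- `k` zero-block insertions preserve the trunk and move the signature by at most `k`. -/
lemma reachK_zeroIns_invariants {q ℓ k : ℕ} (hℓ : 1 ≤ ℓ) {v w : List (ZMod q)}
    (h : reachK (ZeroIns q ℓ) k v w) :
    trunk q ℓ w = trunk q ℓ v ∧ (zsig ℓ v).length = (zsig ℓ w).length ∧
      l1diff (zsig ℓ v) (zsig ℓ w) ≤ k := by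
  induction k generalizing v with
  | zero => cases h; exact ⟨rfl, rfl, (l1diff_self _).le⟩
  | succ k ih =>
    obtain ⟨z, hz, hr⟩ := h
    obtain ⟨h1, h2, h3⟩ := ih hr
    obtain ⟨h4, h5⟩ := zsig_zeroIns hℓ hz
    refine ⟨h1.trans (trunk_zeroIns hz), h4.trans h2, ?_⟩
    have := l1diff_triangle (zsig ℓ v) (zsig ℓ z) (zsig ℓ w) h4
    omega

/-- Two zero runs of lengths congruent modulo `ℓ` can be brought to the same length, namely
that of the longer one, with `|⌊m/ℓ⌋ - ⌊m'/ℓ⌋|` insertions in total. -/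
lemma exists_common_length {ℓ m m' : ℕ} (h : m % ℓ = m' % ℓ) :
    ∃ j j', m + j * ℓ = m' + j' * ℓ ∧ j + j' = max (m / ℓ) (m' / ℓ) - min (m / ℓ) (m' / ℓ) := by
  refine ⟨max (m / ℓ) (m' / ℓ) - m / ℓ, max (m / ℓ) (m' / ℓ) - m' / ℓ, ?_, by omega⟩
  have e (k : ℕ) (hk : k / ℓ ≤ max (m / ℓ) (m' / ℓ)) :
      k + (max (m / ℓ) (m' / ℓ) - k / ℓ) * ℓ = k % ℓ + max (m / ℓ) (m' / ℓ) * ℓ := by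
    obtain ⟨c, hc⟩ := Nat.exists_eq_add_of_le hk
    rw [hc, Nat.add_sub_cancel_left]
    have := Nat.mod_add_div k ℓ
    linear_combination -this
  rw [e m (le_max_left _ _), e m' (le_max_right _ _), h]

/-- Words with the same trunk have a common descendant under zero-block insertion, obtained by
raising both signatures to their entrywise maximum; the numbers of insertions on the two sides
add up to the `ℓ1`-distance of the signatures. -/
lemma exists_common_descendant {q ℓ : ℕ} (v₁ v₂ : List (ZMod q))
    (h : trunk q ℓ v₁ = trunk q ℓ v₂) :
    ∃ w k₁ k₂, reachK (ZeroIns q ℓ) k₁ v₁ w ∧ reachK (ZeroIns q ℓ) k₂ v₂ w ∧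
      k₁ + k₂ = l1diff (zsig ℓ v₁) (zsig ℓ v₂) := by
  induction v₁ using zeroRun_induction generalizing v₂ with
  | h0 m =>
    induction v₂ using zeroRun_induction with
    | h0 m' =>
      rw [trunk_replicate, trunk_replicate] at h
      have hm : m % ℓ = m' % ℓ := by simpa using congrArg List.length h
      obtain ⟨j, j', e, hs⟩ := exists_common_length hm
      refine ⟨List.replicate (m + j * ℓ) 0, j, j', ?_, ?_, ?_⟩
      · simpa using reachK_zeroIns_replicate q ℓ m j []
      · rw [e]; simpa using reachK_zeroIns_replicate q ℓ m' j' []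
      · simp [zsig, zeroRunLengths_replicate, l1diff, hs]
    | h1 m' b v hb _ =>
      rw [trunk_replicate, trunk_replicate_append hb] at h
      exact absurd h (replicate_ne_append_cons hb _ _ _)
  | h1 m a v ha ih =>
    induction v₂ using zeroRun_induction with
    | h0 m' =>
      rw [trunk_replicate, trunk_replicate_append ha] at h
      exact absurd h.symm (replicate_ne_append_cons ha _ _ _)
    | h1 m' b v' hb _ =>
      rw [trunk_replicate_append ha, trunk_replicate_append hb] at h
      obtain ⟨hm, rfl, hv⟩ := replicate_zero_cons_inj ha hb h
      obtain ⟨j, j', e, hs⟩ := exists_common_length hm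
      obtain ⟨w, k₁, k₂, r₁, r₂, hk⟩ := ih v' hv
      have lift {u : List (ZMod q)} {k : ℕ} (r : reachK (ZeroIns q ℓ) k u w) (i : ℕ) :
          reachK (ZeroIns q ℓ) k (List.replicate i 0 ++ a :: u)
            (List.replicate i 0 ++ a :: w) := by
        have h := reachK_zeroIns_append (List.replicate i 0 ++ [a]) r
        rwa [List.append_assoc, List.append_assoc] at h
      refine ⟨List.replicate (m + j * ℓ) 0 ++ a :: w, j + k₁, j' + k₂, ?_, ?_, ?_⟩
      · exact reachK_trans (reachK_zeroIns_replicate q ℓ m j _) (lift r₁ _)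
      · rw [e]
        exact reachK_trans (reachK_zeroIns_replicate q ℓ m' j' _) (lift r₂ _)
      · simp only [zsig, zeroRunLengths_block ha, List.map_cons, l1diff_cons]
        simp only [zsig] at hk
        omega

/-! ### Distance and intersecting spheres -/

/-- A code `C ⊆ Z_q^n` is `t`-tandem-duplication correcting (length `ℓ`) iff
`d_{τ,ℓ}(c₁,c₂) ≥ 2t+1` for all distinct codewords. -/
theorem stmt1 (q ℓ t n : ℕ) (hq : 2 ≤ q) (hℓ : 1 ≤ ℓ) (ht : 1 ≤ t) (hn : ℓ ≤ n)
    (C : Set (List (ZMod q))) (hC : ∀ c ∈ C, c.length = n) :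
    Correcting (TDup ℓ) t C ↔
      ∀ c₁ ∈ C, ∀ c₂ ∈ C, c₁ ≠ c₂ → ((2 * t + 1 : ℕ) : ℕ∞) ≤ tdDist q ℓ c₁ c₂ := by
  constructor
  · intro hcor c₁ h₁ c₂ h₂ hne
    unfold tdDist
    split_ifs with hroot
    swap
    · exact le_top
    obtain ⟨hu, htr⟩ := Prod.mk.inj hroot
    by_contra hlt
    have hd : l1diff (sig q ℓ c₁) (sig q ℓ c₂) < 2 * t + 1 := by exact_mod_cast not_le.mp hlt
    obtain ⟨w, k₁, k₂, r₁, r₂, hk⟩ := exists_common_descendant _ _ htr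
    -- Both codewords have length `n`, so equally many insertions are made on the two sides.
    have hkk : k₁ = k₂ := by
      have l₁ := reachK_zeroIns_length r₁
      have l₂ := reachK_zeroIns_length r₂
      rw [derivV_length, hC c₁ h₁] at l₁
      rw [derivV_length, hC c₂ h₂] at l₂
      exact Nat.eq_of_mul_eq_mul_right hℓ (by omega)
    have hkt : k₁ ≤ t ∧ k₂ ≤ t := by
      change k₁ + k₂ = l1diff (sig q ℓ c₁) (sig q ℓ c₂) at hk
      omega
    obtain ⟨y₁, s₁, d₁, n₁⟩ := reachK_tdup_of_zeroIns (hn.trans (hC c₁ h₁).ge) r₁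
    obtain ⟨y₂, s₂, d₂, n₂⟩ := reachK_tdup_of_zeroIns (hn.trans (hC c₂ h₂).ge) r₂
    have hy : y₁ = y₂ := by
      refine deriv_injective hℓ n₁ n₂ ?_ (d₁.trans d₂.symm)
      rw [(reachK_zeroIns_of_tdup s₁).2, (reachK_zeroIns_of_tdup s₂).2, hu]
    subst hy
    exact hne (hcor c₁ h₁ c₂ h₂ ⟨y₁, ⟨k₁, hkt.1, s₁⟩, ⟨k₂, hkt.2, s₂⟩⟩)
  · rintro hdist c₁ h₁ c₂ h₂ ⟨y, ⟨k₁, hk₁, s₁⟩, ⟨k₂, hk₂, s₂⟩⟩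
    by_contra hne
    have hd := hdist c₁ h₁ c₂ h₂ hne
    obtain ⟨r₁, u₁⟩ := reachK_zeroIns_of_tdup s₁
    obtain ⟨r₂, u₂⟩ := reachK_zeroIns_of_tdup s₂
    obtain ⟨t₁, e₁, b₁⟩ := reachK_zeroIns_invariants hℓ r₁
    obtain ⟨t₂, -, b₂⟩ := reachK_zeroIns_invariants hℓ r₂
    have hroot : root q ℓ c₁ = root q ℓ c₂ := Prod.ext (u₁.symm.trans u₂) (t₁.symm.trans t₂)
    rw [tdDist, if_pos hroot] at hd
    have hd' : 2 * t + 1 ≤ l1diff (zsig ℓ (derivV q ℓ c₁)) (zsig ℓ (derivV q ℓ c₂)) := by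
      exact_mod_cast hd
    have htri := l1diff_triangle (zsig ℓ (derivV q ℓ c₁)) (zsig ℓ (derivV q ℓ y))
      (zsig ℓ (derivV q ℓ c₂)) e₁
    rw [l1diff_comm] at b₂
    omega
end DupPaper
end

section
/- The binary code C = {(0,1,0,1,0,1), (0,1,0,0,1,1)} ⊆ Z_2^6 is single palindromic-deletion correcting for deletions of length ℓ = 2 (the deletion spheres S_{π^δ,2}((010101)) = {(010101)} and S_{π^δ,2}((010011)) = {(010011), (0101)} are disjoint), but it is not single palindromic-duplication correcting for duplications of length ℓ = 2 (indeed (0,1,0,0,1,1,0,1) lies in both duplication spheres S_{π,2}((010101)) and S_{π,2}((010011))). In particular, a single palindromic-deletion correcting code need not be single palindromic-duplication correcting. -/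
/-!
A palindromic deletion of length `2` needs a factor `a b b a`. The word `010101` has none, so its
deletion sphere is trivial; `010011` has exactly one, `1001` at position `1`, whose deletion
yields `0101`. For words of length `6` the prefix `u` has length at most `2`, so
`pdel_two_six` reduces the deletion relation to three explicit positions. On the other side,
`0·10·01·101` and `010·01·10·1` exhibit `01001101` as a duplication of both codewords.
-/

namespace DupPaper

variable {α : Type*}

theorem mem_sphere_one {β : Type*} (rel : List β → List β → Prop) (x y : List β) :
    y ∈ sphere rel 1 x ↔ y = x ∨ rel x y := by
  constructor
  · rintro ⟨k, hk, h⟩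
    interval_cases k
    · exact Or.inl h.symm
    · obtain ⟨z, hz, rfl⟩ := h
      exact Or.inr hz
  · rintro (rfl | h)
    · exact ⟨0, by omega, rfl⟩
    · exact ⟨1, le_rfl, y, h, rfl⟩

/-- A length-`2` palindromic deletion of a word of length `6` occurs at position `0`, `1` or
`2`, according to which of the three factors of length `4` is a palindrome. -/
theorem pdel_two_six {β : Type*} (a b c d e f : β) (y : List β) :
    PDel 2 [a, b, c, d, e, f] y ↔
      (a = d ∧ b = c ∧ y = [a, b, e, f]) ∨ (b = e ∧ c = d ∧ y = [a, b, c, f]) ∨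
        (c = f ∧ d = e ∧ y = [a, b, c, d]) := by
  constructor
  · rintro ⟨u, v, w, hv, hx, rfl⟩
    obtain ⟨p, q, rfl⟩ := List.length_eq_two.mp hv
    rcases u with _ | ⟨u₀, _ | ⟨u₁, _ | ⟨u₂, u⟩⟩⟩
    · simp at hx
      obtain ⟨rfl, rfl, rfl, rfl, rfl⟩ := hx
      simp
    · simp at hx
      obtain ⟨rfl, rfl, rfl, rfl, rfl, rfl⟩ := hx
      simp
    · simp at hx
      obtain ⟨rfl, rfl, rfl, rfl, rfl, rfl, rfl⟩ := hx
      simp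
    · have := congrArg List.length hx
      simp at this
      omega
  · rintro (⟨rfl, rfl, rfl⟩ | ⟨rfl, rfl, rfl⟩ | ⟨rfl, rfl, rfl⟩)
    · exact ⟨[], [a, b], [e, f], rfl, rfl, rfl⟩
    · exact ⟨[a], [b, c], [f], rfl, rfl, rfl⟩
    · exact ⟨[a, b], [c, d], [], rfl, rfl, rfl⟩

/-- The code `C = {010101, 010011} ⊆ Z_2^6` is single palindromic-deletion correcting
(length 2) but not single palindromic-duplication correcting (length 2). -/
theorem stmt3 :
    sphere (PDel 2) 1 ([0,1,0,1,0,1] : List (ZMod 2)) = {[0,1,0,1,0,1]} ∧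
    sphere (PDel 2) 1 ([0,1,0,0,1,1] : List (ZMod 2)) = {[0,1,0,0,1,1], [0,1,0,1]} ∧
    Disjoint (sphere (PDel 2) 1 ([0,1,0,1,0,1] : List (ZMod 2)))
      (sphere (PDel 2) 1 ([0,1,0,0,1,1] : List (ZMod 2))) ∧
    Correcting (PDel 2) 1 ({[0,1,0,1,0,1], [0,1,0,0,1,1]} : Set (List (ZMod 2))) ∧
    ([0,1,0,0,1,1,0,1] : List (ZMod 2)) ∈
      sphere (PDup 2) 1 ([0,1,0,1,0,1] : List (ZMod 2)) ∩
        sphere (PDup 2) 1 ([0,1,0,0,1,1] : List (ZMod 2)) ∧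
    ¬ Correcting (PDup 2) 1 ({[0,1,0,1,0,1], [0,1,0,0,1,1]} : Set (List (ZMod 2))) := by
  have h₁ : sphere (PDel 2) 1 ([0,1,0,1,0,1] : List (ZMod 2)) = {[0,1,0,1,0,1]} := by
    ext y
    simp [mem_sphere_one, pdel_two_six]
  have h₂ : sphere (PDel 2) 1 ([0,1,0,0,1,1] : List (ZMod 2)) =
      {[0,1,0,0,1,1], [0,1,0,1]} := by
    ext y
    simp [mem_sphere_one, pdel_two_six]
  have hdisj : Disjoint (sphere (PDel 2) 1 ([0,1,0,1,0,1] : List (ZMod 2)))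
      (sphere (PDel 2) 1 ([0,1,0,0,1,1] : List (ZMod 2))) := by
    rw [h₁, h₂]
    simp
  have hdup : ([0,1,0,0,1,1,0,1] : List (ZMod 2)) ∈
      sphere (PDup 2) 1 ([0,1,0,1,0,1] : List (ZMod 2)) ∩
        sphere (PDup 2) 1 ([0,1,0,0,1,1] : List (ZMod 2)) :=
    ⟨(mem_sphere_one _ _ _).mpr (Or.inr ⟨[0], [1, 0], [1, 0, 1], rfl, rfl, rfl⟩),
      (mem_sphere_one _ _ _).mpr (Or.inr ⟨[0, 1, 0], [0, 1], [1], rfl, rfl, rfl⟩)⟩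
  refine ⟨h₁, h₂, hdisj, ?_, hdup, ?_⟩
  · rintro c₁ (rfl | rfl) c₂ (rfl | rfl) hne
    · rfl
    · exact absurd hdisj (Set.not_disjoint_iff_nonempty_inter.mpr hne)
    · exact absurd hdisj.symm (Set.not_disjoint_iff_nonempty_inter.mpr hne)
    · rfl
  · intro h
    have := h _ (Or.inl rfl) _ (Or.inr rfl) ⟨_, hdup⟩
    simp at this

end DupPaper
end

section
/- The binary code C = {(0,1,1,0,1,0), (0,1,1,1,1,0)} ⊆ Z_2^6 is single palindromic-duplication correcting for duplications of length ℓ = 2 (the duplication spheres S_{π,2}((011010)) = {(011010), (01101010), (01111010), (01100110), (01101100), (01101001)} and S_{π,2}((011110)) = {(011110), (01101110), (01111110), (01111001)} are disjoint), but it is not single palindromic-deletion correcting for deletions of length ℓ = 2 (indeed (0,1,1,0) lies in both deletion spheres S_{π^δ,2}((011010)) and S_{π^δ,2}((011110))). In particular, a single palindromic-duplication correcting code need not be single palindromic-deletion correcting. -/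
/-! A duplication of length `ℓ` is determined by its position `i ≤ n - ℓ`
(`pDup_iff_exists_pdupAt`), so a duplication sphere of radius one is the centre together with the
`n - ℓ + 1` words `pdupAt i ℓ x`. For the two codewords this is a list of five positions each, which
gives the two spheres; they have no common word. For deletions, `0110` arises from
`(01)(10)10` and from `0(11)(11)0`. -/

namespace DupPaper

variable {α : Type*}

/-- The duplications of `x` are exactly those performed at an admissible position. -/
theorem pDup_iff_exists_pdupAt {β : Type*} (ℓ : ℕ) (x y : List β) :
    PDup ℓ x y ↔ ∃ i, i + ℓ ≤ x.length ∧ y = pdupAt i ℓ x := by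
  constructor
  · rintro ⟨u, v, w, rfl, rfl, rfl⟩
    refine ⟨u.length, by simp, ?_⟩
    have h : u.length + v.length = (u ++ v).length := by simp
    have h1 : (u ++ v ++ w).take (u.length + v.length) = u ++ v := by
      rw [h, List.take_left]
    have h2 : (u ++ v ++ w).drop (u.length + v.length) = w := by
      rw [h, List.drop_left]
    have h3 : ((u ++ v ++ w).drop u.length).take v.length = v := by
      rw [List.append_assoc, List.drop_left, List.take_left]
    rw [pdupAt, h1, h2, h3]
  · rintro ⟨i, hi, rfl⟩
    refine ⟨x.take i, (x.drop i).take ℓ, x.drop (i + ℓ), ?_, ?_, ?_⟩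
    · simp only [List.length_take, List.length_drop]
      omega
    · rw [← List.take_add, List.take_append_drop]
    · rw [pdupAt, List.take_add]

/-- For a word of length six, a length-two duplication happens at one of five positions. -/
theorem mem_sphere_pDup_two {β : Type*} (x y : List β) (hx : x.length = 6) :
    y ∈ sphere (PDup 2) 1 x ↔ y = x ∨ y = pdupAt 0 2 x ∨ y = pdupAt 1 2 x ∨
      y = pdupAt 2 2 x ∨ y = pdupAt 3 2 x ∨ y = pdupAt 4 2 x := by
  rw [mem_sphere_one, pDup_iff_exists_pdupAt, hx]
  refine or_congr_right ⟨?_, ?_⟩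
  · rintro ⟨i, hi, rfl⟩
    have hi' : i ≤ 4 := by omega
    interval_cases i <;> simp
  · rintro (h | h | h | h | h)
    · exact ⟨0, by omega, h⟩
    · exact ⟨1, by omega, h⟩
    · exact ⟨2, by omega, h⟩
    · exact ⟨3, by omega, h⟩
    · exact ⟨4, by omega, h⟩

/-- The code `C = {011010, 011110} ⊆ Z_2^6` is single palindromic-duplication correcting
(length 2) but not single palindromic-deletion correcting (length 2). -/
theorem stmt4 :
    sphere (PDup 2) 1 ([0,1,1,0,1,0] : List (ZMod 2)) =
      {[0,1,1,0,1,0], [0,1,1,0,1,0,1,0], [0,1,1,1,1,0,1,0], [0,1,1,0,0,1,1,0],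
        [0,1,1,0,1,1,0,0], [0,1,1,0,1,0,0,1]} ∧
    sphere (PDup 2) 1 ([0,1,1,1,1,0] : List (ZMod 2)) =
      {[0,1,1,1,1,0], [0,1,1,0,1,1,1,0], [0,1,1,1,1,1,1,0], [0,1,1,1,1,0,0,1]} ∧
    Disjoint (sphere (PDup 2) 1 ([0,1,1,0,1,0] : List (ZMod 2)))
      (sphere (PDup 2) 1 ([0,1,1,1,1,0] : List (ZMod 2))) ∧
    Correcting (PDup 2) 1 ({[0,1,1,0,1,0], [0,1,1,1,1,0]} : Set (List (ZMod 2))) ∧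
    ([0,1,1,0] : List (ZMod 2)) ∈
      sphere (PDel 2) 1 ([0,1,1,0,1,0] : List (ZMod 2)) ∩
        sphere (PDel 2) 1 ([0,1,1,1,1,0] : List (ZMod 2)) ∧
    ¬ Correcting (PDel 2) 1 ({[0,1,1,0,1,0], [0,1,1,1,1,0]} : Set (List (ZMod 2))) := by
  have h1 : sphere (PDup 2) 1 ([0,1,1,0,1,0] : List (ZMod 2)) =
      {[0,1,1,0,1,0], [0,1,1,0,1,0,1,0], [0,1,1,1,1,0,1,0], [0,1,1,0,0,1,1,0],
        [0,1,1,0,1,1,0,0], [0,1,1,0,1,0,0,1]} := by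
    ext y
    exact mem_sphere_pDup_two _ y rfl
  have h2 : sphere (PDup 2) 1 ([0,1,1,1,1,0] : List (ZMod 2)) =
      {[0,1,1,1,1,0], [0,1,1,0,1,1,1,0], [0,1,1,1,1,1,1,0], [0,1,1,1,1,0,0,1]} := by
    ext y
    -- Positions 1, 2 and 3 all duplicate inside the run of ones and give the same word.
    have h : y ∈ sphere (PDup 2) 1 ([0,1,1,1,1,0] : List (ZMod 2)) ↔
        y = [0,1,1,1,1,0] ∨ y = [0,1,1,0,1,1,1,0] ∨ y = [0,1,1,1,1,1,1,0] ∨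
          y = [0,1,1,1,1,1,1,0] ∨ y = [0,1,1,1,1,1,1,0] ∨ y = [0,1,1,1,1,0,0,1] :=
      mem_sphere_pDup_two _ y rfl
    rw [h]
    simp only [Set.mem_insert_iff, Set.mem_singleton_iff]
    tauto
  have h3 : Disjoint (sphere (PDup 2) 1 ([0,1,1,0,1,0] : List (ZMod 2)))
      (sphere (PDup 2) 1 ([0,1,1,1,1,0] : List (ZMod 2))) := by
    rw [h1, h2, Set.disjoint_left]
    simp only [Set.mem_insert_iff, Set.mem_singleton_iff]
    rintro y (rfl | rfl | rfl | rfl | rfl | rfl) <;> decide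
  have h4 : ([0,1,1,0] : List (ZMod 2)) ∈
      sphere (PDel 2) 1 ([0,1,1,0,1,0] : List (ZMod 2)) ∩
        sphere (PDel 2) 1 ([0,1,1,1,1,0] : List (ZMod 2)) :=
    ⟨(mem_sphere_one _ _ _).2 (Or.inr ⟨[], [0,1], [1,0], rfl, rfl, rfl⟩),
      (mem_sphere_one _ _ _).2 (Or.inr ⟨[0], [1,1], [0], rfl, rfl, rfl⟩)⟩
  refine ⟨h1, h2, h3, ?_, h4, ?_⟩
  · rintro c₁ (rfl | rfl) c₂ (rfl | rfl) ⟨y, hy₁, hy₂⟩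
    · rfl
    · exact (Set.disjoint_left.1 h3 hy₁ hy₂).elim
    · exact (Set.disjoint_left.1 h3 hy₂ hy₁).elim
    · rfl
  · intro h
    exact absurd (h _ (Or.inl rfl) _ (Or.inr rfl) ⟨_, h4⟩) (by decide)

end DupPaper
end

section
/- For all integers q ≥ 2, ℓ ≥ 1, t ≥ 1, n ≥ ℓ and every x ∈ Z_q^n with ℓ-step derivative φ_ℓ(x) = (u, v), the size of the tandem duplication sphere satisfies |S_{τ,ℓ,t}(x)| = Σ_{j=0}^{t} C(wt_H(v)+j, j) = C(t + wt_H(v) + 1, t), where wt_H(v) is the Hamming weight of v and C(·,·) denotes the binomial coefficient. -/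
/-!
Fix `x` with `|x| ≥ ℓ` and count the words reached by exactly `k` tandem duplications; this
number is `C(wt + k, k)`, where `wt` is the weight of the derivative of `x` (`reachK_count`).
The proof is by induction on `x`. If `|x| = ℓ`, only powers of `x` are reached. Otherwise write
`x = c p d w` with `|p| = ℓ - 1`, so that `d - c` is the first derivative entry.

* If `c = d`, duplicating `c p` gives the same word as duplicating `p c`, so the first symbol is
  a spectator (`reachK_cons_iff_of_eq`), and neither the count nor the weight changes when it is
  dropped.
* If `c ≠ d`, a word reached in `k + 1` steps is either `c p` followed by a word reached from `x`
  in `k` steps, or `c` followed by a word reached from `p d w` in `k + 1` steps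
  (`reachK_succ_cons_iff`). As the first `ℓ` symbols of a word never change (`reachK_take`), the
  entry in position `ℓ` is `c` in the first case and `d` in the second, so the two cases exclude
  each other. Pascal's rule completes the induction.

Each duplication adds `ℓ ≥ 1` symbols, so the counts for different `k` add up (`sphere_count`);
the resulting sum is evaluated by the hockey-stick identity (`sum_choose_diag`).
-/

namespace DupPaper

variable {α : Type*}

/-! ### One tandem duplication -/

theorem TDup.append_left {ℓ : ℕ} {x y : List α} (h : TDup ℓ x y) (p : List α) :
    TDup ℓ (p ++ x) (p ++ y) := by
  obtain ⟨u, v, w, hv, rfl, rfl⟩ := h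
  exact ⟨p ++ u, v, w, hv, by simp, by simp⟩

theorem TDup.length_eq {ℓ : ℕ} {x y : List α} (h : TDup ℓ x y) :
    y.length = x.length + ℓ := by
  obtain ⟨u, v, w, hv, rfl, rfl⟩ := h
  simp; omega

/-- The first `ℓ` symbols survive, because the copy is inserted after them. -/
theorem TDup.take_eq {ℓ : ℕ} {x y : List α} (h : TDup ℓ x y) : y.take ℓ = x.take ℓ := by
  obtain ⟨u, v, w, hv, rfl, rfl⟩ := h
  have h : ℓ ≤ (u ++ v).length := by simp; omega
  rw [List.append_assoc (u ++ v), List.take_append_of_le_length (l₁ := u ++ v) h,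
    List.take_append_of_le_length (l₁ := u ++ v) h]

theorem TDup.prefix_dup {ℓ : ℕ} {x : List α} (hx : ℓ ≤ x.length) :
    TDup ℓ x (x.take ℓ ++ x) :=
  ⟨[], x.take ℓ, x.drop ℓ, by simpa using hx, by simp, by simp⟩

/-- A duplication either copies the prefix of length `ℓ` or avoids the first symbol. -/
theorem TDup.cons_cases {ℓ : ℕ} {c : α} {x y : List α} (h : TDup ℓ (c :: x) y) :
    y = (c :: x).take ℓ ++ (c :: x) ∨ ∃ y', y = c :: y' ∧ TDup ℓ x y' := by
  obtain ⟨u, v, w, hv, hx, rfl⟩ := h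
  cases u with
  | nil =>
    left
    rw [hx]
    simp [← hv]
  | cons a u =>
    right
    simp only [List.cons_append, List.cons.injEq] at hx
    obtain ⟨rfl, rfl⟩ := hx
    exact ⟨u ++ v ++ v ++ w, by simp, u, v, w, hv, rfl, rfl⟩

/-- After the prefix of length `ℓ` has been duplicated, every further duplication can be
taken to act behind the first copy: in the periodic region `p ++ p`, a duplication starting
inside the first copy yields the same word as one duplicating the second copy. -/
theorem TDup.of_prefix_dup {ℓ : ℕ} {p x y : List α} (hx : ℓ ≤ x.length) (hp : x.take ℓ = p)
    (h : TDup ℓ (p ++ x) y) : ∃ y', y = p ++ y' ∧ TDup ℓ x y' := by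
  have hpl : p.length = ℓ := by rw [← hp]; simpa using hx
  obtain ⟨u, v, w, hv, hxy, rfl⟩ := h
  rcases le_or_gt ℓ u.length with hu | hu
  · obtain ⟨u', rfl⟩ : ∃ u', u = p ++ u' := by
      refine ⟨u.drop ℓ, ?_⟩
      have := congrArg (List.take ℓ) hxy
      rw [List.append_assoc u, List.take_append_of_le_length (by omega),
        List.take_append_of_le_length hu, List.take_of_length_le (by omega)] at this
      rw [this, List.take_append_drop]
    refine ⟨u' ++ v ++ v ++ w, by simp, u', v, w, hv, ?_, rfl⟩
    simpa using hxy
  -- In the other case `v = v₁ ++ v₂` with `v₁` the part of `v` lying in the first copy `p`.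
  · obtain ⟨v₁, v₂, rfl, hv₁⟩ : ∃ v₁ v₂, v = v₁ ++ v₂ ∧ v₁.length = ℓ - u.length :=
      ⟨v.take (ℓ - u.length), v.drop (ℓ - u.length), by simp, by simp; omega⟩
    simp only [List.length_append] at hv
    have h1 : p ++ x = (u ++ v₁) ++ (v₂ ++ w) := by simpa using hxy
    obtain ⟨h2, h3⟩ := List.append_inj h1 (by simp; omega)
    -- Periodicity forces `u = v₂`, and `w` begins with `v₁`.
    have h4 : v₂ ++ w = u ++ (v₁ ++ (v₂ ++ w).drop ℓ) := by
      rw [← List.append_assoc, ← h2, ← hp, h3, List.take_append_drop]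
    obtain ⟨h5, h6⟩ := List.append_inj h4 (by omega)
    generalize (v₂ ++ w).drop ℓ = w' at h6
    subst h5 h6
    refine ⟨v₂ ++ v₁ ++ v₂ ++ v₁ ++ w', by rw [h2]; simp, [], v₂ ++ v₁, w', by simp; omega, ?_, ?_⟩
    · rw [h3]; simp
    · simp

/-! ### Exactly `k` tandem duplications -/

theorem reachK_append_left {ℓ k : ℕ} {x y : List α} (h : reachK (TDup ℓ) k x y) (p : List α) :
    reachK (TDup ℓ) k (p ++ x) (p ++ y) := by
  induction k generalizing x with
  | zero => exact congrArg (p ++ ·) h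
  | succ k ih =>
    obtain ⟨z, hz, h⟩ := h
    exact ⟨p ++ z, hz.append_left p, ih h⟩

theorem reachK_length {ℓ k : ℕ} {x y : List α} (h : reachK (TDup ℓ) k x y) :
    y.length = x.length + k * ℓ := by
  induction k generalizing x with
  | zero => cases h; simp
  | succ k ih =>
    obtain ⟨z, hz, h⟩ := h
    rw [ih h, hz.length_eq]; ring

theorem reachK_take {ℓ k : ℕ} {x y : List α} (h : reachK (TDup ℓ) k x y) :
    y.take ℓ = x.take ℓ := by
  induction k generalizing x with
  | zero => cases h; rfl
  | succ k ih =>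
    obtain ⟨z, hz, h⟩ := h
    rw [ih h, hz.take_eq]

theorem reachK_of_prefix_dup {ℓ k : ℕ} {p x y : List α} (hx : ℓ ≤ x.length)
    (hp : x.take ℓ = p) (h : reachK (TDup ℓ) k (p ++ x) y) :
    ∃ y', y = p ++ y' ∧ reachK (TDup ℓ) k x y' := by
  induction k generalizing x with
  | zero => exact ⟨x, h.symm, rfl⟩
  | succ k ih =>
    obtain ⟨z, hz, h⟩ := h
    obtain ⟨z', rfl, hz'⟩ := hz.of_prefix_dup hx hp
    obtain ⟨y', rfl, hy'⟩ := ih (by rw [hz'.length_eq]; omega) (hz'.take_eq.trans hp) h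
    exact ⟨y', rfl, z', hz', hy'⟩

/-- If the prefix is duplicated at some step, that step may be moved to the front. -/
theorem reachK_succ_cons_iff {ℓ k : ℕ} {c : α} {x y : List α} (hx : ℓ ≤ x.length) :
    reachK (TDup ℓ) (k + 1) (c :: x) y ↔
      (∃ y', y = (c :: x).take ℓ ++ y' ∧ reachK (TDup ℓ) k (c :: x) y') ∨
      (∃ y', y = c :: y' ∧ reachK (TDup ℓ) (k + 1) x y') := by
  constructor
  · intro h
    induction k generalizing x with
    | zero =>
      obtain ⟨z, hz, rfl⟩ := h
      rcases hz.cons_cases with rfl | ⟨z', rfl, hz'⟩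
      · exact Or.inl ⟨_, rfl, rfl⟩
      · exact Or.inr ⟨z', rfl, z', hz', rfl⟩
    | succ k ih =>
      obtain ⟨z, hz, h⟩ := h
      rcases hz.cons_cases with rfl | ⟨z', rfl, hz'⟩
      · exact Or.inl (reachK_of_prefix_dup (by simp; omega) rfl h)
      · rcases ih (by rw [hz'.length_eq]; omega) h with ⟨y', rfl, hy'⟩ | ⟨y', rfl, hy'⟩
        · exact Or.inl ⟨y', by rw [hz.take_eq], _, hz, hy'⟩
        · exact Or.inr ⟨y', rfl, z', hz', hy'⟩
  · rintro (⟨y', rfl, h⟩ | ⟨y', rfl, h⟩)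
    · exact ⟨_, TDup.prefix_dup (by simp; omega), reachK_append_left h _⟩
    · exact reachK_append_left h [c]

/-- When the first derivative entry vanishes, duplicating the prefix gives the same word as
duplicating the block one position to the right, so the first symbol plays no role. -/
theorem reachK_cons_iff_of_eq {k : ℕ} {c : α} {p w y : List α} :
    reachK (TDup (p.length + 1)) k (c :: (p ++ c :: w)) y ↔
      ∃ y', y = c :: y' ∧ reachK (TDup (p.length + 1)) k (p ++ c :: w) y' := by
  constructor
  · intro h
    -- The hypothesis on the first derivative entry, in a form stable under duplications.
    have key : ∀ (k : ℕ) (x : List α), (∃ w, x = p ++ c :: w) →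
        reachK (TDup (p.length + 1)) k (c :: x) y →
        ∃ y', y = c :: y' ∧ reachK (TDup (p.length + 1)) k x y' := by
      intro k
      induction k with
      | zero => intro x _ h; exact ⟨x, h.symm, rfl⟩
      | succ k ih =>
        rintro x ⟨w, rfl⟩ ⟨z, hz, h⟩
        have hz' : ∃ z', z = c :: z' ∧ TDup (p.length + 1) (p ++ c :: w) z' := by
          rcases hz.cons_cases with rfl | hz'
          · refine ⟨p ++ [c] ++ (p ++ [c]) ++ w, by simp, [], p ++ [c], w, by simp, by simp,
              by simp⟩
          · exact hz'
        obtain ⟨z', rfl, hz'⟩ := hz'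
        have ht := hz'.take_eq
        obtain ⟨y', rfl, hy'⟩ := ih z' ⟨z'.drop (p.length + 1), by
          conv_lhs => rw [← List.take_append_drop (p.length + 1) z', ht]
          simp [List.take_append]⟩ h
        exact ⟨y', rfl, z', hz', hy'⟩
    exact key k _ ⟨w, rfl⟩ h
  · rintro ⟨y', rfl, h⟩
    exact reachK_append_left h [c]

/-! ### Counting -/

theorem derivV_cons {q : ℕ} (c d : ZMod q) (p w : List (ZMod q)) :
    derivV q (p.length + 1) (c :: (p ++ d :: w))
      = (d - c) :: derivV q (p.length + 1) (p ++ d :: w) := by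
  have h : (p ++ d :: w).drop (p.length + 1) = w := by
    rw [← List.drop_drop]; simp
  simp [derivV]

/-- The number of words reached by exactly `k` duplications; in the inductive step the two
cases of a zero and a nonzero first derivative entry correspond to a bijection and to
Pascal's rule. -/
theorem reachK_count {q ℓ : ℕ} (hℓ : 1 ≤ ℓ) (x : List (ZMod q)) (hx : ℓ ≤ x.length) (k : ℕ) :
    {y | reachK (TDup ℓ) k x y}.Finite ∧
    {y | reachK (TDup ℓ) k x y}.ncard = Nat.choose (wtH (derivV q ℓ x) + k) k := by
  induction x generalizing k with
  | nil => simp at hx; omega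
  | cons c x ih =>
    rcases Nat.lt_or_ge x.length ℓ with hlt | hge
    · have hl : (c :: x).length = ℓ := by simp at hx ⊢; omega
      generalize c :: x = x at hl hx
      have hd : wtH (derivV q ℓ x) = 0 := by simp [derivV, ← hl, wtH]
      rw [hd, Nat.zero_add, Nat.choose_self]
      suffices h : ∃ y₀, {y | reachK (TDup ℓ) k x y} = {y₀} by
        obtain ⟨y₀, h⟩ := h
        rw [h]; simp
      induction k with
      | zero => exact ⟨x, by ext y; exact eq_comm⟩
      | succ k ihk =>
        obtain ⟨y₀, h⟩ := ihk
        have ht : x.take ℓ = x := List.take_of_length_le hl.le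
        refine ⟨x ++ y₀, Set.eq_singleton_iff_unique_mem.2 ⟨?_, ?_⟩⟩
        · have h0 : y₀ ∈ {y | reachK (TDup ℓ) k x y} := by rw [h]; rfl
          refine ⟨x ++ x, ?_, reachK_append_left h0 x⟩
          simpa [ht] using TDup.prefix_dup hx
        · rintro y ⟨z, hz, hy⟩
          have hz' : z = x ++ x := by
            obtain ⟨u, v, w, hv, rfl, rfl⟩ := hz
            simp only [List.length_append] at hl
            obtain rfl : u = [] := List.eq_nil_of_length_eq_zero (by omega)
            obtain rfl : w = [] := List.eq_nil_of_length_eq_zero (by omega)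
            simp
          subst hz'
          obtain ⟨y', rfl, hy'⟩ := reachK_of_prefix_dup hx ht hy
          have : y' ∈ {y | reachK (TDup ℓ) k x y} := hy'
          rw [h] at this
          rw [Set.mem_singleton_iff.1 this]
    · obtain ⟨p, d, w, rfl, rfl⟩ : ∃ p d w, x = p ++ d :: w ∧ ℓ = p.length + 1 :=
        ⟨x.take (ℓ - 1), x[ℓ - 1], x.drop ℓ, by
          conv_lhs => rw [← List.take_append_drop (ℓ - 1) x,
            List.drop_eq_getElem_cons (by omega : ℓ - 1 < x.length)]
          rw [Nat.sub_add_cancel hℓ], by simp; omega⟩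
      rw [derivV_cons]
      by_cases hcd : c = d
      · subst hcd
        have hset : {y | reachK (TDup (p.length + 1)) k (c :: (p ++ c :: w)) y}
            = (c :: ·) '' {y | reachK (TDup (p.length + 1)) k (p ++ c :: w) y} := by
          ext y
          simp only [Set.mem_ofPred_eq, Set.mem_image, reachK_cons_iff_of_eq]
          grind
        rw [hset, Set.ncard_image_of_injective _ List.cons_injective]
        have hw : wtH ((c - c) :: derivV q (p.length + 1) (p ++ c :: w))
            = wtH (derivV q (p.length + 1) (p ++ c :: w)) := by simp [wtH]
        rw [hw]
        exact ⟨(ih hge k).1.image _, (ih hge k).2⟩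
      · have hw : wtH ((d - c) :: derivV q (p.length + 1) (p ++ d :: w))
            = wtH (derivV q (p.length + 1) (p ++ d :: w)) + 1 := by
          simp [wtH, sub_eq_zero, Ne.symm hcd]
        rw [hw]
        induction k with
        | zero =>
          have : {y | reachK (TDup (p.length + 1)) 0 (c :: (p ++ d :: w)) y}
              = {c :: (p ++ d :: w)} := by ext y; exact eq_comm
          rw [this]; simp
        | succ k ihk =>
          have hset : {y | reachK (TDup (p.length + 1)) (k + 1) (c :: (p ++ d :: w)) y}
              = ((c :: p) ++ ·) '' {y | reachK (TDup (p.length + 1)) k (c :: (p ++ d :: w)) y} ∪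
                (c :: ·) '' {y | reachK (TDup (p.length + 1)) (k + 1) (p ++ d :: w) y} := by
            ext y
            simp only [Set.mem_ofPred_eq, Set.mem_union, Set.mem_image,
              reachK_succ_cons_iff hge]
            have : (c :: (p ++ d :: w)).take (p.length + 1) = c :: p := by simp
            rw [this]
            simp only [and_comm, eq_comm]
          obtain ⟨hf1, hc1⟩ := ihk
          obtain ⟨hf2, hc2⟩ := ih hge (k + 1)
          -- Entry `ℓ` (counting from `0`) is `c` on one side and `d` on the other.
          have hdisj : Disjoint
              (((c :: p) ++ ·) '' {y | reachK (TDup (p.length + 1)) k (c :: (p ++ d :: w)) y})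
              ((c :: ·) '' {y | reachK (TDup (p.length + 1)) (k + 1) (p ++ d :: w) y}) := by
            rw [Set.disjoint_left]
            rintro _ ⟨y, hy, rfl⟩ ⟨y', hy', h⟩
            simp only [List.cons_append, List.cons.injEq, true_and] at h
            subst h
            have h1 := reachK_take hy
            have h2 := reachK_take hy'
            cases y with
            | nil => simp at h1
            | cons a y =>
              simp only [List.take_succ_cons, List.cons.injEq] at h1
              simp [List.take_append] at h2
              exact hcd (h1.1.symm.trans h2)
          rw [hset]
          refine ⟨(hf1.image _).union (hf2.image _), ?_⟩
          rw [Set.ncard_union_eq hdisj (hf1.image _) (hf2.image _),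
            Set.ncard_image_of_injective _ (List.append_right_injective _),
            Set.ncard_image_of_injective _ List.cons_injective, hc1, hc2]
          generalize wtH (derivV q (p.length + 1) (p ++ d :: w)) = m
          rw [show m + (k + 1) = m + 1 + k by ring]
          exact (Nat.choose_succ_succ (m + 1 + k) k).symm

theorem sphere_count {q ℓ : ℕ} (hℓ : 1 ≤ ℓ) (x : List (ZMod q)) (hx : ℓ ≤ x.length) (t : ℕ) :
    (sphere (TDup ℓ) t x).Finite ∧ (sphere (TDup ℓ) t x).ncard
      = ∑ j ∈ Finset.range (t + 1), Nat.choose (wtH (derivV q ℓ x) + j) j := by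
  induction t with
  | zero =>
    have h : sphere (TDup ℓ) 0 x = {y | reachK (TDup ℓ) 0 x y} := by
      ext y; simp [sphere]
    rw [h]
    simpa using reachK_count hℓ x hx 0
  | succ t ih =>
    have h : sphere (TDup ℓ) (t + 1) x
        = sphere (TDup ℓ) t x ∪ {y | reachK (TDup ℓ) (t + 1) x y} := by
      ext y
      simp only [sphere, Set.mem_ofPred_eq, Set.mem_union, Nat.le_succ_iff]
      grind
    have hdisj : Disjoint (sphere (TDup ℓ) t x) {y | reachK (TDup ℓ) (t + 1) x y} := by
      rw [Set.disjoint_left]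
      rintro y ⟨k, hk, hy⟩ hy'
      have h1 := reachK_length hy
      have h2 := reachK_length hy'
      have h3 : k * ℓ = (t + 1) * ℓ := by omega
      have := Nat.eq_of_mul_eq_mul_right hℓ h3
      omega
    obtain ⟨hf, hc⟩ := reachK_count hℓ x hx (t + 1)
    rw [h]
    refine ⟨ih.1.union hf, ?_⟩
    rw [Set.ncard_union_eq hdisj ih.1 hf, ih.2, hc, Finset.sum_range_succ _ (t + 1)]

theorem sum_choose_diag (w t : ℕ) :
    ∑ j ∈ Finset.range (t + 1), Nat.choose (w + j) j = Nat.choose (t + w + 1) t := by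
  induction t with
  | zero => simp
  | succ t ih =>
    rw [Finset.sum_range_succ, ih, Nat.choose_succ_succ (t + 1 + w)]
    congr 2 <;> ring

/-- The size of the tandem duplication sphere:
`|S_{τ,ℓ,t}(x)| = Σ_{j=0}^t C(wt_H(v)+j, j) = C(t+wt_H(v)+1, t)` where `φ_ℓ(x) = (u,v)`. -/
theorem stmt5 (q ℓ t n : ℕ) (hq : 2 ≤ q) (hℓ : 1 ≤ ℓ) (ht : 1 ≤ t) (hn : ℓ ≤ n)
    (x : List (ZMod q)) (hx : x.length = n) :
    (sphere (TDup ℓ) t x).ncard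
        = ∑ j ∈ Finset.range (t + 1), Nat.choose (wtH (derivV q ℓ x) + j) j ∧
    (sphere (TDup ℓ) t x).ncard = Nat.choose (t + wtH (derivV q ℓ x) + 1) t := by
  subst hx
  have h := (sphere_count hℓ x hn t).2
  exact ⟨h, h.trans (sum_choose_diag _ _)⟩
end DupPaper
end

section
/- For all integers q ≥ 2, ℓ ≥ 1, n ≥ ℓ and every x ∈ Z_q^n with ℓ-step derivative φ_ℓ(x) = (u, v), the size of the single tandem deletion sphere satisfies |S_{τ^δ,ℓ,1}(x)| = wt_H(σ_ℓ(v)) + 1, where wt_H(σ_ℓ(v)) is the number of nonzero entries of the ℓ-zero signature σ_ℓ(v). -/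
/-!
A tandem deletion at position `i` of `x` is available exactly when the `ℓ` derivative entries
starting at `i` all vanish (`tdel_iff`). Two deletions give the same word exactly when their
positions lie in the same zero run of the derivative, so the number of distinct results is the
number of zero runs of length at least `ℓ`, that is, the number of nonzero entries of the
signature.

The count is carried out by induction on the word (`tdel_ncard`). Prepending a letter adds at most
one new result, the deletion at position `0` (`tdel_cons_iff`). If this deletion is available, its
result was already present precisely when the leading zero run of the derivative is longer than
`ℓ` (`drop_mem_iff`); hence a new word appears exactly when that run grows to length `ℓ`, which is
when its signature entry turns from `0` to `1`. The sphere has the additional element `x`, which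
differs from every deletion result in length.
-/

namespace DupPaper

variable {α : Type*}

/-- `x` and its shift by `ℓ` agree at index `k`; equivalently, entry `k` of the `ℓ`-step
derivative of `x` exists and is zero. -/
def ShiftAgree (ℓ : ℕ) (x : List α) (k : ℕ) : Prop :=
  k + ℓ < x.length ∧ x[k + ℓ]? = x[k]?

theorem derivV_getElem?_eq_zero (q ℓ : ℕ) (x : List (ZMod q)) (k : ℕ) :
    (derivV q ℓ x)[k]? = some 0 ↔ ShiftAgree ℓ x k := by
  unfold derivV ShiftAgree
  rw [List.getElem?_zipWith, List.getElem?_drop, Nat.add_comm ℓ k]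
  by_cases h : k + ℓ < x.length
  · have h' : k < x.length := by omega
    simp [h, h', sub_eq_zero]
  · simp [h]

/-- The first zero-run length `m` is the largest `j` such that the first `j` entries vanish. -/
theorem zeroRunLengths_head {q : ℕ} (v : List (ZMod q)) :
    ∃ m ms, zeroRunLengths v = m :: ms ∧
      ∀ j, j ≤ m ↔ ∀ k < j, v[k]? = some 0 := by
  induction v with
  | nil =>
    refine ⟨0, [], rfl, fun j => ⟨by intro h k hk; omega, fun h => ?_⟩⟩
    by_contra hj
    simpa using h 0 (by omega)
  | cons a v ih =>
    obtain ⟨m, ms, hm, hj⟩ := ih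
    by_cases ha : a = 0
    · refine ⟨m + 1, ms, by simp [zeroRunLengths, hm, ha], fun j => ?_⟩
      cases j with
      | zero => simp
      | succ j =>
        rw [Nat.add_le_add_iff_right, hj]
        constructor
        · intro h k hk
          cases k with
          | zero => simp [ha]
          | succ k => simpa using h k (by omega)
        · intro h k hk
          simpa using h (k + 1) (by omega)
    · refine ⟨0, m :: ms, by simp [zeroRunLengths, hm, ha], fun j => ?_⟩
      constructor
      · intro h k hk; omega
      · intro h
        by_contra hj
        have := h 0 (by omega)
        simp [ha] at this

/-- Positional form of a tandem deletion: it is available at position `i` exactly when `ℓ`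
consecutive derivative entries starting at `i` vanish, and it removes the block at `i`. -/
theorem tdel_iff {ℓ : ℕ} (hℓ : 1 ≤ ℓ) (x y : List α) :
    TDel ℓ x y ↔ ∃ i, (∀ k < ℓ, ShiftAgree ℓ x (i + k)) ∧ y = x.take i ++ x.drop (i + ℓ) := by
  constructor
  · rintro ⟨u, v, w, hv, rfl, rfl⟩
    refine ⟨u.length, fun k hk => ⟨by simp; omega, ?_⟩, ?_⟩
    · have e1 : u.length + k + ℓ = u.length + (v.length + k) := by omega
      rw [e1]
      simp only [List.append_assoc]
      rw [List.getElem?_append_right (Nat.le_add_right _ _),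
        List.getElem?_append_right (Nat.le_add_right _ _), Nat.add_sub_cancel_left,
        Nat.add_sub_cancel_left, List.getElem?_append_right (Nat.le_add_right _ _),
        Nat.add_sub_cancel_left, List.getElem?_append_left (by omega),
        List.getElem?_append_left (by omega)]
    · simp [List.append_assoc, ← hv, List.drop_append]
  · rintro ⟨i, h, rfl⟩
    have hlen := (h (ℓ - 1) (by omega)).1
    have hv : ((x.drop i).take ℓ) = ((x.drop (i + ℓ)).take ℓ) := by
      apply List.ext_getElem?
      intro k
      by_cases hk : k < ℓ
      · rw [List.getElem?_take_of_lt hk, List.getElem?_take_of_lt hk, List.getElem?_drop,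
          List.getElem?_drop, ← (h k hk).2]
        congr 1
        omega
      · rw [List.getElem?_eq_none (by simp; omega), List.getElem?_eq_none (by simp; omega)]
    have e : x.drop (i + ℓ) = (x.drop i).take ℓ ++ x.drop (i + ℓ + ℓ) := by
      rw [hv, ← List.drop_drop (i := ℓ) (j := i + ℓ), List.take_append_drop]
    refine ⟨x.take i, (x.drop i).take ℓ, x.drop (i + ℓ + ℓ), by simp; omega, ?_, ?_⟩
    · rw [List.append_assoc, List.append_assoc, ← e, ← List.drop_drop (i := ℓ) (j := i),
        List.take_append_drop, List.take_append_drop]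
    · rw [List.append_assoc, ← e]

theorem shiftAgree_cons_succ (ℓ : ℕ) (a : α) (x : List α) (k : ℕ) :
    ShiftAgree ℓ (a :: x) (k + 1) ↔ ShiftAgree ℓ x k := by
  unfold ShiftAgree
  have e : k + 1 + ℓ = k + ℓ + 1 := by omega
  simp [e]

/-- A tandem deletion of `a :: x` either happens inside `x` or at position `0`. -/
theorem tdel_cons_iff {ℓ : ℕ} (hℓ : 1 ≤ ℓ) (a : α) (x y : List α) :
    TDel ℓ (a :: x) y ↔ (∃ z, TDel ℓ x z ∧ a :: z = y) ∨
      ((∀ k < ℓ, ShiftAgree ℓ (a :: x) k) ∧ y = (a :: x).drop ℓ) := by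
  simp only [tdel_iff hℓ]
  constructor
  · rintro ⟨i, h, rfl⟩
    cases i with
    | zero => right; simpa using h
    | succ i =>
      left
      refine ⟨_, ⟨i, fun k hk => ?_, rfl⟩, ?_⟩
      · rw [← shiftAgree_cons_succ ℓ a]
        have := h k hk
        rwa [show i + 1 + k = i + k + 1 by omega] at this
      · rw [show i + 1 + ℓ = i + ℓ + 1 by omega]; simp
  · rintro (⟨z, ⟨i, h, rfl⟩, rfl⟩ | ⟨h, rfl⟩)
    · refine ⟨i + 1, fun k hk => ?_, ?_⟩
      · rw [show i + 1 + k = i + k + 1 by omega, shiftAgree_cons_succ]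
        exact h k hk
      · rw [show i + 1 + ℓ = i + ℓ + 1 by omega]; simp
    · exact ⟨0, by simpa using h, by simp⟩

/-- When deleting at position `0` is possible, its result is also obtained by a later deletion
if and only if the leading zero run of the derivative has length greater than `ℓ`. -/
theorem drop_mem_iff {ℓ : ℕ} (hℓ : 1 ≤ ℓ) (a : α) (x : List α)
    (h0 : ∀ k < ℓ, ShiftAgree ℓ (a :: x) k) :
    (∃ z, TDel ℓ x z ∧ a :: z = (a :: x).drop ℓ) ↔ ∀ k < ℓ + 1, ShiftAgree ℓ (a :: x) k := by
  constructor
  · rintro ⟨z, hz, he⟩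
    obtain ⟨i, h, rfl⟩ := (tdel_iff hℓ x z).1 hz
    intro k hk
    by_cases hkl : k < ℓ
    · exact h0 k hkl
    obtain rfl : k = ℓ := by omega
    -- If `k ≤ i`, index `k` lies in the prefix kept by the later deletion, so equality of the
    -- two results forces agreement there; otherwise it lies in the repeated block.
    by_cases hki : k ≤ i
    · have hlen := (h 0 (by omega)).1
      refine ⟨by simp; omega, ?_⟩
      have := congrArg (fun l : List α => l[k]?) he
      simp only [List.getElem?_drop] at this
      rw [← this]
      obtain ⟨m, rfl⟩ : ∃ m, k = m + 1 := ⟨k - 1, by omega⟩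
      rw [List.getElem?_cons_succ, List.getElem?_cons_succ,
        List.getElem?_append_left (by simp; omega), List.getElem?_take_of_lt (by omega)]
    · have := h (k - 1 - i) (by omega)
      rw [← shiftAgree_cons_succ k a] at this
      rwa [show i + (k - 1 - i) + 1 = k by omega] at this
  · intro h
    refine ⟨x.drop ℓ, ?_, ?_⟩
    · refine (tdel_iff hℓ _ _).2 ⟨0, fun k hk => ?_, by simp⟩
      rw [Nat.zero_add, ← shiftAgree_cons_succ ℓ a]
      exact h (k + 1) (by omega)
    · obtain ⟨hl, he⟩ := h0 0 (by omega)
      rw [Nat.zero_add] at hl he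
      rw [List.drop_eq_getElem_cons hl]
      rw [List.getElem?_eq_getElem hl] at he
      simp at he
      simp [he]

/-- Derivative of `a :: x`: either both derivatives are empty or one entry is prepended. -/
theorem derivV_cons_s6 {q ℓ : ℕ} (hℓ : 1 ≤ ℓ) (a : ZMod q) (x : List (ZMod q)) :
    (derivV q ℓ (a :: x) = [] ∧ derivV q ℓ x = []) ∨
      ∃ c, derivV q ℓ (a :: x) = c :: derivV q ℓ x := by
  obtain ⟨l, rfl⟩ : ∃ l, ℓ = l + 1 := ⟨ℓ - 1, by omega⟩
  unfold derivV
  by_cases h : l < x.length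
  · right
    rw [List.drop_succ_cons, List.drop_eq_getElem_cons h]
    exact ⟨_, rfl⟩
  · left
    constructor
    · rw [List.drop_eq_nil_of_le (by simp; omega)]; rfl
    · rw [List.drop_eq_nil_of_le (by omega)]; rfl

/-- The set of tandem deletions is finite, with one element per zero run of length at least `ℓ`:
prepending a letter creates a new word exactly when the leading zero run grows to length `ℓ`. -/
theorem tdel_ncard {q ℓ : ℕ} (hℓ : 1 ≤ ℓ) (x : List (ZMod q)) :
    {y | TDel ℓ x y}.Finite ∧
      {y | TDel ℓ x y}.ncard = ((sig q ℓ x).filter (fun m => m ≠ 0)).length := by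
  induction x with
  | nil =>
    have : {y | TDel ℓ ([] : List (ZMod q)) y} = ∅ := by
      ext y
      simp only [Set.mem_ofPred_eq, Set.mem_empty_iff_false, iff_false, tdel_iff hℓ]
      rintro ⟨i, h, -⟩
      simpa using (h 0 hℓ).1
    rw [this]
    simp [sig, derivV, zeroRunLengths]
  | cons a x ih =>
    obtain ⟨hfin, hcard⟩ := ih
    have hfin' : ((a :: ·) '' {y | TDel ℓ x y}).Finite := hfin.image _
    have hcard' : ((a :: ·) '' {y | TDel ℓ x y}).ncard = {y | TDel ℓ x y}.ncard :=
      Set.ncard_image_of_injective _ (List.cons_injective)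
    have hset : ∀ y, TDel ℓ (a :: x) y ↔ y ∈ ((a :: ·) '' {y | TDel ℓ x y}) ∨
      ((∀ k < ℓ, ShiftAgree ℓ (a :: x) k) ∧ y = (a :: x).drop ℓ) := fun y =>
        tdel_cons_iff hℓ a x y
    obtain ⟨m, ms, hm, hj⟩ := zeroRunLengths_head (derivV q ℓ (a :: x))
    simp only [derivV_getElem?_eq_zero] at hj
    by_cases h0 : ∀ k < ℓ, ShiftAgree ℓ (a :: x) k
    · have hmem : (a :: x).drop ℓ ∈ ((a :: ·) '' {y | TDel ℓ x y}) ↔ ℓ + 1 ≤ m :=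
        (drop_mem_iff hℓ a x h0).trans (hj (ℓ + 1)).symm
      have hins : {y | TDel ℓ (a :: x) y} =
          insert ((a :: x).drop ℓ) ((a :: ·) '' {y | TDel ℓ x y}) := by
        ext y
        rw [Set.mem_ofPred_eq, hset, Set.mem_insert_iff, or_comm, and_iff_right h0]
      have hle : ℓ ≤ m := (hj ℓ).2 h0
      have hd0 : (derivV q ℓ (a :: x))[0]? = some 0 :=
        (derivV_getElem?_eq_zero q ℓ _ 0).2 (h0 0 hℓ)
      refine ⟨hins ▸ hfin'.insert _, ?_⟩
      rcases derivV_cons_s6 hℓ a x with ⟨h1, -⟩ | ⟨c, hc⟩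
      · simp [h1] at hd0
      obtain rfl : c = 0 := by simpa [hc] using hd0
      obtain ⟨m', ms', hm', -⟩ := zeroRunLengths_head (derivV q ℓ x)
      have hmm : m = m' + 1 ∧ ms = ms' := by
        rw [hc] at hm
        simpa [zeroRunLengths, hm', eq_comm] using hm
      obtain ⟨rfl, rfl⟩ := hmm
      have hpos : (m' + 1) / ℓ ≠ 0 := (Nat.div_pos hle hℓ).ne'
      rw [hins]
      by_cases hlt : ℓ + 1 ≤ m' + 1
      · have hpos' : m' / ℓ ≠ 0 := (Nat.div_pos (by omega) hℓ).ne'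
        rw [Set.insert_eq_of_mem (hmem.2 hlt), hcard', hcard, sig, sig, hm, hm',
          List.map_cons, List.map_cons, List.filter_cons_of_pos (by exact decide_eq_true hpos'),
          List.filter_cons_of_pos (by exact decide_eq_true hpos), List.length_cons, List.length_cons]
      · have hzero : m' / ℓ = 0 := Nat.div_eq_of_lt (by omega)
        rw [Set.ncard_insert_of_notMem (fun h => hlt (hmem.1 h)) hfin', hcard', hcard, sig, sig,
          hm, hm', List.map_cons, List.map_cons, List.filter_cons_of_neg (by rw [hzero]; simp),
          List.filter_cons_of_pos (by exact decide_eq_true hpos), List.length_cons]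
    · have heq : {y | TDel ℓ (a :: x) y} = ((a :: ·) '' {y | TDel ℓ x y}) := by
        ext y
        rw [Set.mem_ofPred_eq, hset]
        simp [h0]
      refine ⟨heq ▸ hfin', ?_⟩
      rw [heq, hcard', hcard]
      have hlt : m < ℓ := by
        by_contra hc
        exact h0 ((hj ℓ).1 (by omega))
      rcases derivV_cons_s6 hℓ a x with ⟨h1, h2⟩ | ⟨c, hc⟩
      · rw [sig, sig, h1, h2]
      obtain ⟨m', ms', hm', -⟩ := zeroRunLengths_head (derivV q ℓ x)
      by_cases hc0 : c = 0
      · have hmm : m = m' + 1 ∧ ms = ms' := by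
          rw [hc] at hm
          simpa [zeroRunLengths, hm', hc0, eq_comm] using hm
        obtain ⟨rfl, rfl⟩ := hmm
        have e1 : m' / ℓ = 0 := Nat.div_eq_of_lt (by omega)
        have e2 : (m' + 1) / ℓ = 0 := Nat.div_eq_of_lt hlt
        simp only [sig, hm, hm', List.map_cons, e1, e2]
      · have e : zeroRunLengths (derivV q ℓ (a :: x)) = 0 :: zeroRunLengths (derivV q ℓ x) := by
          rw [hc]; simp [zeroRunLengths, hc0]
        simp [sig, e]

/-- The size of the single tandem deletion sphere:
`|S_{τ^δ,ℓ,1}(x)| = wt_H(σ_ℓ(v)) + 1` where `φ_ℓ(x) = (u,v)`. -/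
theorem stmt6 (q ℓ n : ℕ) (hq : 2 ≤ q) (hℓ : 1 ≤ ℓ) (hn : ℓ ≤ n)
    (x : List (ZMod q)) (hx : x.length = n) :
    (sphere (TDel ℓ) 1 x).ncard = ((sig q ℓ x).filter (fun m => m ≠ 0)).length + 1 := by
  have hset : sphere (TDel ℓ) 1 x = insert x {y | TDel ℓ x y} := by
    ext y
    simp only [sphere, Set.mem_ofPred_eq, Set.mem_insert_iff]
    constructor
    · rintro ⟨k, hk, h⟩
      interval_cases k
      · exact Or.inl h.symm
      · obtain ⟨z, hz, rfl⟩ := h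
        exact Or.inr hz
    · rintro (rfl | h)
      · exact ⟨0, by omega, rfl⟩
      · exact ⟨1, le_rfl, y, h, rfl⟩
  obtain ⟨hfin, hcard⟩ := tdel_ncard hℓ x
  have hnot : x ∉ {y | TDel ℓ x y} := by
    rintro ⟨u, v, w, hv, h1, h2⟩
    have e1 := congrArg List.length h1
    have e2 := congrArg List.length h2
    simp only [List.length_append] at e1 e2
    omega
  rw [hset, Set.ncard_insert_of_notMem hnot hfin, hcard]

end DupPaper
end

section
/- For all integers q ≥ 2, n ≥ 1 and every x ∈ Z_q^n, the size of the single palindromic duplication sphere for duplication length ℓ = 1 satisfies |S_{π,1}(x)| = r(x) + 1, where r(x) is the number of runs of x. -/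
/-!
Let `D(x)` be the set of words obtained from `x` by duplicating exactly one symbol. Every word of
`D(x)` is longer than `x`, so the sphere is the disjoint union of `{x}` and `D(x)`, and it remains
to see that `|D(x)| = r(x)` (`ncard_dupSet`).

This goes by induction on `x`, from the recursion `D(a t) = {a a t} ∪ a D(t)` (`dupSet_cons`).
Words in `D(t)` start with the same symbol as `t`, so `a a t` lies in `a D(t)` if and only if `t`
starts with `a` (`cons_mem_dupSet`). Hence `|D(a t)|` exceeds `|D(t)|` by one exactly when `a`
opens a new run, which is the recursion satisfied by `r` (`numRuns_cons`).
-/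

namespace DupPaper

variable {α : Type*}

/-- The words obtained from `x` by duplicating exactly one symbol. -/
def dupSet (x : List α) : Set (List α) := {y | PDup 1 x y}

lemma mem_dupSet {x y : List α} :
    y ∈ dupSet x ↔ ∃ u a w, x = u ++ a :: w ∧ y = u ++ a :: a :: w := by
  constructor
  · rintro ⟨u, v, w, hv, rfl, rfl⟩
    obtain ⟨a, rfl⟩ := List.length_eq_one_iff.mp hv
    exact ⟨u, a, w, by simp, by simp⟩
  · rintro ⟨u, a, w, rfl, rfl⟩
    exact ⟨u, [a], w, rfl, by simp, by simp⟩

lemma dupSet_nil : dupSet ([] : List α) = ∅ := by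
  ext y
  simp [mem_dupSet]

lemma dupSet_cons (a : α) (t : List α) :
    dupSet (a :: t) = insert (a :: a :: t) (List.cons a '' dupSet t) := by
  ext y
  simp only [Set.mem_insert_iff, Set.mem_image, mem_dupSet]
  constructor
  · rintro ⟨u, b, w, hx, rfl⟩
    cases u with
    | nil =>
      simp only [List.nil_append, List.cons.injEq] at hx
      obtain ⟨rfl, rfl⟩ := hx
      exact Or.inl rfl
    | cons c u =>
      simp only [List.cons_append, List.cons.injEq] at hx
      obtain ⟨rfl, rfl⟩ := hx
      exact Or.inr ⟨_, ⟨u, b, w, rfl, rfl⟩, rfl⟩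
  · rintro (rfl | ⟨z, ⟨u, b, w, rfl, rfl⟩, rfl⟩)
    · exact ⟨[], a, t, rfl, rfl⟩
    · exact ⟨a :: u, b, w, rfl, rfl⟩

lemma dupSet_finite (x : List α) : (dupSet x).Finite := by
  induction x with
  | nil => simp [dupSet_nil]
  | cons a t ih =>
    rw [dupSet_cons]
    exact (ih.image _).insert _

lemma head?_of_mem_dupSet {x y : List α} (h : y ∈ dupSet x) : y.head? = x.head? := by
  obtain ⟨u, a, w, rfl, rfl⟩ := mem_dupSet.mp h
  cases u <;> rfl

/-- Duplicating the leading `a` of `a :: t` duplicates a symbol of `t` behind that `a` exactly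
when the run of `a` continues into `t`. -/
lemma cons_mem_dupSet (a : α) (t : List α) : a :: t ∈ dupSet t ↔ t.head? = some a := by
  constructor
  · intro h
    simpa using (head?_of_mem_dupSet h).symm
  · intro h
    obtain ⟨t', rfl⟩ := List.head?_eq_some_iff.mp h
    exact mem_dupSet.mpr ⟨[], a, t', rfl, rfl⟩

lemma runs_head? [DecidableEq α] (x : List α) :
    (runs x).head?.bind List.head? = x.head? := by
  cases x with
  | nil => rfl
  | cons a t =>
    rw [runs]
    split
    · rfl
    · split_ifs <;> rfl

lemma numRuns_cons [DecidableEq α] (a : α) (t : List α) :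
    numRuns (a :: t) = if t.head? = some a then numRuns t else numRuns t + 1 := by
  have h := runs_head? t
  unfold numRuns
  rw [runs]
  split
  · rename_i hr
    simp only [hr] at h ⊢
    simp [← h]
  · rename_i r rs hr
    simp only [hr, List.head?_cons, Option.bind_some] at h ⊢
    rw [← h]
    split_ifs <;> rfl

lemma ncard_dupSet [DecidableEq α] (x : List α) : (dupSet x).ncard = numRuns x := by
  induction x with
  | nil => simp [dupSet_nil, numRuns, runs]
  | cons a t ih =>
    have hinj : Function.Injective (List.cons a) := List.cons_injective
    have himg : (List.cons a '' dupSet t).ncard = numRuns t := by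
      rw [Set.ncard_image_of_injective _ hinj, ih]
    have hmem : a :: a :: t ∈ List.cons a '' dupSet t ↔ t.head? = some a := by
      rw [hinj.mem_set_image, cons_mem_dupSet]
    rw [dupSet_cons, numRuns_cons]
    split_ifs with h
    · rw [Set.insert_eq_of_mem (hmem.mpr h), himg]
    · rw [Set.ncard_insert_of_notMem (mt hmem.mp h) ((dupSet_finite t).image _), himg]

lemma sphere_one (x : List α) : sphere (PDup 1) 1 x = insert x (dupSet x) := by
  ext y
  simp only [sphere, dupSet, Set.mem_setOf_eq, Set.mem_insert_iff]
  constructor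
  · rintro ⟨k, hk, h⟩
    interval_cases k
    · exact Or.inl h.symm
    · obtain ⟨z, hz, rfl⟩ := h
      exact Or.inr hz
  · rintro (rfl | h)
    · exact ⟨0, by simp, rfl⟩
    · exact ⟨1, le_rfl, y, h, rfl⟩

lemma self_notMem_dupSet (x : List α) : x ∉ dupSet x := by
  intro h
  obtain ⟨u, a, w, h1, h2⟩ := mem_dupSet.mp h
  have := congrArg List.length (h1.symm.trans h2)
  simp at this

/-- The size of the single palindromic duplication sphere for `ℓ = 1`:
`|S_{π,1}(x)| = r(x) + 1`. -/
theorem stmt7 (q n : ℕ) (hq : 2 ≤ q) (hn : 1 ≤ n) (x : List (ZMod q)) (hx : x.length = n) :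
    (sphere (PDup 1) 1 x).ncard = numRuns x + 1 := by
  rw [sphere_one, Set.ncard_insert_of_notMem (self_notMem_dupSet x) (dupSet_finite x),
    ncard_dupSet]
end DupPaper
end
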